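/- arXiv:1505.02372 — 3 statements merged into one kernel-verified Lean document; each statement's English description precedes it below -/
import Mathlib

section
/- Let ψ be any growing function and let φ be any growing function satisfying φ(n) ≤ n/(log₂ n + log₂ ψ(n)) for all sufficiently large n. Then there exists a sequence q₀(n) with q₀(n) ~ n·2^{n−⌈n/φ(n)⌉} such that L(n, q₀(n)) ≲ 2^n as n → ∞. -/
open Filter

namespace Rev

/-- A reversible gate `TOF(I; t)` on `N` lines: a control set `I` with `|I| ≤ 2`
and a target `t ∉ I`.  `|I| = 0, 1, 2` correspond to NOT, CNOT, C²NOT. -/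
structure Gate (N : ℕ) where
  I : Finset (Fin N)
  t : Fin N
  card_le : I.card ≤ 2
  t_not_mem : t ∉ I

/-- The transformation computed by a gate: the target coordinate is XORed with the
conjunction of the control coordinates (the empty conjunction is `1`). -/
def Gate.apply {N : ℕ} (g : Gate N) (x : Fin N → Bool) : Fin N → Bool :=
  fun j => if j = g.t then xor (x g.t) (decide (∀ i ∈ g.I, x i = true)) else x j

/-- A reversible circuit: a finite sequence (composition) of gates. -/
abbrev Circuit (N : ℕ) := List (Gate N)

/-- The transformation computed by a circuit (composition of the gate maps). -/
def Circuit.eval {N : ℕ} (S : Circuit N) (x : Fin N → Bool) : Fin N → Bool :=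
  S.foldl (fun v g => g.apply v) x

/-- Gate complexity: the number of gates. -/
def Circuit.L {N : ℕ} (S : Circuit N) : ℕ := S.length

/-- The number of NOT and CNOT gates. -/
def Circuit.LC {N : ℕ} (S : Circuit N) : ℕ := (S.filter fun g => g.I.card ≤ 1).length

/-- The number of C²NOT (Toffoli) gates. -/
def Circuit.LT {N : ℕ} (S : Circuit N) : ℕ := (S.filter fun g => g.I.card = 2).length

/-- The quantum weight, given weights `WC` for NOT/CNOT gates and `WT` for C²NOT gates. -/
noncomputable def Circuit.W {N : ℕ} (WC WT : ℝ) (S : Circuit N) : ℝ :=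
  WC * S.LC + WT * S.LT

/-- A circuit has depth one if the sets `{t} ∪ I` of its gates are pairwise disjoint. -/
def DepthOne {N : ℕ} (S : Circuit N) : Prop :=
  S.Pairwise fun g₁ g₂ => Disjoint (insert g₁.t g₁.I) (insert g₂.t g₂.I)

/-- The depth of a circuit: the minimal number of depth-one sub-circuits whose
concatenation is the circuit. -/
noncomputable def Circuit.D {N : ℕ} (S : Circuit N) : ℕ :=
  sInf {d | ∃ parts : List (Circuit N),
    parts.length = d ∧ parts.flatten = S ∧ ∀ p ∈ parts, DepthOne p}

/-- Padding an input vector with zero values on `q` additional inputs. -/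
def pad {n q : ℕ} (x : Fin n → Bool) : Fin (n + q) → Bool :=
  fun i => if h : (i : ℕ) < n then x ⟨i, h⟩ else false

/-- A circuit `S` with `n + q` inputs implements `f : 𝔹ⁿ → 𝔹ᵐ` with `q` additional
inputs: there is a permutation `π` of the output positions such that for every `x`,
applying `S` to `⟨x, 0, …, 0⟩` and permuting the coordinates by `π` yields a vector
whose first `m` coordinates equal `f x`. -/
def Implements {n q m : ℕ} (S : Circuit (n + q)) (f : (Fin n → Bool) → Fin m → Bool) :
    Prop :=
  m ≤ n + q ∧ ∃ π : Equiv.Perm (Fin (n + q)), ∀ x : Fin n → Bool, ∀ j : Fin m,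
    ∀ hj : (j : ℕ) < n + q, Circuit.eval S (pad x) (π ⟨j, hj⟩) = f x j

/-- `f ∈ F(n, q)`: `f : 𝔹ⁿ → 𝔹ⁿ` is implementable with `q` additional inputs. -/
def Implementable (n q : ℕ) (f : (Fin n → Bool) → Fin n → Bool) : Prop :=
  ∃ S : Circuit (n + q), Implements S f

/-- `L(f, q)`: minimal gate complexity of a circuit implementing `f` with `q`
additional inputs. -/
noncomputable def Lmin (n q : ℕ) (f : (Fin n → Bool) → Fin n → Bool) : ℕ :=
  sInf {l | ∃ S : Circuit (n + q), Implements S f ∧ S.L = l}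

/-- The Shannon gate complexity function `L(n, q)`. -/
noncomputable def Lsh (n q : ℕ) : ℕ :=
  sSup {l | ∃ f, Implementable n q f ∧ Lmin n q f = l}

/-- `D(f, q)`: minimal depth of a circuit implementing `f` with `q` additional inputs. -/
noncomputable def Dmin (n q : ℕ) (f : (Fin n → Bool) → Fin n → Bool) : ℕ :=
  sInf {d | ∃ S : Circuit (n + q), Implements S f ∧ S.D = d}

/-- The Shannon depth function `D(n, q)`. -/
noncomputable def Dsh (n q : ℕ) : ℕ :=
  sSup {d | ∃ f, Implementable n q f ∧ Dmin n q f = d}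

/-- `W(f, q)`: minimal quantum weight of a circuit implementing `f` with `q`
additional inputs. -/
noncomputable def Wmin (WC WT : ℝ) (n q : ℕ) (f : (Fin n → Bool) → Fin n → Bool) : ℝ :=
  sInf {w | ∃ S : Circuit (n + q), Implements S f ∧ Circuit.W WC WT S = w}

/-- The Shannon quantum weight function `W(n, q)`. -/
noncomputable def Wsh (WC WT : ℝ) (n q : ℕ) : ℝ :=
  sSup {w | ∃ f, Implementable n q f ∧ Wmin WC WT n q f = w}

/-- `a ~ b`: `a n / b n → 1`. -/
def AsympEquiv (a b : ℕ → ℝ) : Prop :=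
  Tendsto (fun n => a n / b n) atTop (nhds 1)

/-- `a ≲ b`: `limsup (a n / b n) ≤ 1`. -/
def AsympLE (a b : ℕ → ℝ) : Prop :=
  Filter.limsup (fun n => a n / b n) atTop ≤ 1

/-- A growing function: nondecreasing and tending to `+∞`. -/
def Growing (φ : ℕ → ℝ) : Prop :=
  Monotone φ ∧ Tendsto φ atTop atTop

/-- `2 ^ (n - ⌈n / φ(n)⌉)` as a real number. -/
noncomputable def pow2e (φ : ℕ → ℝ) (n : ℕ) : ℝ :=
  (2 : ℝ) ^ ((n : ℤ) - ⌈(n : ℝ) / φ n⌉)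

end Rev

namespace Rev

section Abs

variable {Λ X : Type*} [DecidableEq Λ]

def StepR (A B : Λ → X → Bool) : Prop :=
  ∃ (t : Λ) (I : Finset Λ), I.card ≤ 2 ∧ t ∉ I ∧
    B = fun l x => if l = t then xor (A t x) (decide (∀ i ∈ I, A i x = true)) else A l x

theorem StepR.symm {A B : Λ → X → Bool} (h : StepR A B) : StepR B A := by
  obtain ⟨t, I, hI, ht, rfl⟩ := h
  refine ⟨t, I, hI, ht, ?_⟩
  funext l x
  have key : (∀ i ∈ I, (if i = t then xor (A t x) (decide (∀ i ∈ I, A i x = true)) else A i x) = true)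
      ↔ (∀ i ∈ I, A i x = true) := by
    refine forall₂_congr fun i hi => ?_
    have : i ≠ t := fun h => ht (h ▸ hi)
    simp [this]
  by_cases hl : l = t
  · subst hl
    simp only [if_true, key]
    simp
  · simp [hl]

inductive Reach : ℕ → (Λ → X → Bool) → (Λ → X → Bool) → Prop
  | refl (k : ℕ) (A : Λ → X → Bool) : Reach k A A
  | tail {k : ℕ} {A B C : Λ → X → Bool} : Reach k A B → StepR B C → Reach (k + 1) A C

theorem Reach.mono {k k' : ℕ} {A B : Λ → X → Bool} (h : Reach k A B) (hk : k ≤ k') :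
    Reach k' A B := by
  induction h generalizing k' with
  | refl k A => exact .refl _ _
  | tail h st ih =>
    obtain ⟨m, rfl⟩ : ∃ m, k' = m + 1 := ⟨k' - 1, by omega⟩
    exact .tail (ih (by omega)) st

theorem Reach.trans {k k' : ℕ} {A B C : Λ → X → Bool} (h : Reach k A B) (h' : Reach k' B C) :
    Reach (k + k') A C := by
  induction h' with
  | refl k' B => exact h.mono (by omega)
  | tail h' st ih => exact .tail (ih h) st

theorem StepR.reach {A B : Λ → X → Bool} (h : StepR A B) : Reach 1 A B := .tail (.refl 0 _) h

theorem Reach.symm {k : ℕ} {A B : Λ → X → Bool} (h : Reach k A B) : Reach k B A := by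
  induction h with
  | refl k A => exact .refl _ _
  | tail h st ih => exact (st.symm.reach.trans ih).mono (by omega)

theorem stepNot (A : Λ → X → Bool) (t : Λ) :
    Reach 1 A (Function.update A t (fun x => !(A t x))) := by
  refine StepR.reach ⟨t, ∅, by simp, by simp, ?_⟩
  funext l x
  by_cases h : l = t
  · subst h; simp
  · simp [h]

theorem stepC (A : Λ → X → Bool) (t a : Λ) (h : t ≠ a) :
    Reach 1 A (Function.update A t (fun x => xor (A t x) (A a x))) := by
  refine StepR.reach ⟨t, {a}, by simp, by simpa using h, ?_⟩
  funext l x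
  by_cases h : l = t
  · subst h; simp
  · simp [h]

theorem stepCC (A : Λ → X → Bool) (t a b : Λ) (h : t ≠ a) (h' : t ≠ b) :
    Reach 1 A (Function.update A t (fun x => xor (A t x) (A a x && A b x))) := by
  refine StepR.reach ⟨t, {a, b}, Finset.card_le_two, by simp [h, h'], ?_⟩
  funext l x
  by_cases h : l = t
  · subst h; simp [Bool.decide_and]
  · simp [h]

theorem Reach.toCircuit {N k : ℕ} {A B : Λ → X → Bool} (h : Reach k A B) (ι : Λ ↪ Fin N) :
    ∃ S : Circuit N, S.length ≤ k ∧
      ∀ x v, (∀ l, v (ι l) = A l x) → ∀ l, Circuit.eval S v (ι l) = B l x := by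
  induction h with
  | refl k A => exact ⟨[], by simp, fun x v hv l => by simpa [Circuit.eval] using hv l⟩
  | tail h st ih =>
    obtain ⟨S, hS, hv⟩ := ih
    obtain ⟨t, I, hI, ht, rfl⟩ := st
    refine ⟨S ++ [⟨I.map ι, ι t, by simpa using hI, by simpa using ht⟩], by simpa using hS, ?_⟩
    intro x v hvx l
    have := hv x v hvx
    simp only [Circuit.eval, List.foldl_append, List.foldl_cons, List.foldl_nil] at this ⊢
    simp only [Gate.apply, ι.injective.eq_iff, this, Finset.forall_mem_map]

/-- finset loop -/
theorem Reach.loop {α : Type*} [DecidableEq α] (F : Finset α) (A : Finset α → Λ → X → Bool) (k : ℕ)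
    (h : ∀ (G : Finset α) (a : α), a ∉ G → Reach k (A G) (A (insert a G))) :
    Reach (F.card * k) (A ∅) (A F) := by
  induction F using Finset.induction_on with
  | empty => exact .refl _ _
  | insert a G ha ih =>
    rw [Finset.card_insert_of_notMem ha]
    exact (ih.trans (h G a ha)).mono (by ring_nf; omega)

end Abs

section Con

variable {n : ℕ} {H O : Type} [DecidableEq H] [DecidableEq O]

abbrev Ln (n : ℕ) (H O : Type) := Fin n ⊕ (Fin (n + 1) ⊕ (H ⊕ O))

abbrev XX (n : ℕ) := Fin n → Bool

def stt (c : Fin (n + 1) → XX n → Bool) (h : H → XX n → Bool) (o : O → XX n → Bool) :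
    Ln n H O → XX n → Bool :=
  Sum.elim (fun i x => x i) (Sum.elim c (Sum.elim h o))

def mt (τ : Fin n → Option Bool) (m : ℕ) (x : XX n) : Bool :=
  decide (∀ i : Fin n, i.val < m → ∀ b, τ i = some b → x i = b)

def cc (τ : Fin n → Option Bool) (k : ℕ) (i : Fin (n + 1)) (x : XX n) : Bool :=
  if i.val < k then mt τ i.val x else false

theorem mt_succ (τ : Fin n → Option Bool) (m : ℕ) (hm : m < n) (x : XX n) :
    mt τ (m + 1) x = (mt τ m x && decide (∀ b, τ ⟨m, hm⟩ = some b → x ⟨m, hm⟩ = b)) := by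
  rw [mt, mt, ← Bool.decide_and]
  congr 1
  apply propext
  constructor
  · intro h
    exact ⟨fun i hi => h i (by omega), h ⟨m, hm⟩ (by simp)⟩
  · rintro ⟨h1, h2⟩ i hi
    rcases Nat.lt_succ_iff_lt_or_eq.1 hi with h | h
    · exact h1 i h
    · subst h; exact h2

theorem chain_step (τ : Fin n → Option Bool) (m : ℕ) (hm : m < n)
    (h : H → XX n → Bool) (o : O → XX n → Bool) :
    Reach 2 (stt (cc τ (m + 1)) h o) (stt (cc τ (m + 2)) h o) := by
  set t : Ln n H O := .inr (.inl ⟨m + 1, by omega⟩) with htd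
  set a : Ln n H O := .inr (.inl ⟨m, by omega⟩) with had
  set b : Ln n H O := .inl ⟨m, hm⟩ with hbd
  have hta : t ≠ a := by simp [htd, had]
  have htb : t ≠ b := by simp [htd, hbd]
  have ext1 : ∀ g : XX n → Bool, (∀ x, g x = mt τ (m + 1) x) →
      Function.update (stt (cc τ (m + 1)) h o) t g = stt (cc τ (m + 2)) h o := by
    intro g hg
    simp only [stt, htd, Sum.update_elim_inr, Sum.update_elim_inl]
    congr 2
    funext i x
    by_cases hi : i = ⟨m + 1, by omega⟩
    · subst hi; simp [cc, hg]
    · simp only [Function.update_of_ne hi, cc]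
      have : i.val ≠ m + 1 := fun h => hi (Fin.ext h)
      congr 1
      apply propext; omega
  have et : ∀ x, stt (cc τ (m + 1)) h o t x = false := by intro x; simp [stt, htd, cc]
  have ea : ∀ x, stt (cc τ (m + 1)) h o a x = mt τ m x := by intro x; simp [stt, had, cc]
  have eb : ∀ x, stt (cc τ (m + 1)) h o b x = x ⟨m, hm⟩ := by intro x; simp [stt, hbd]
  rcases hτ : τ ⟨m, hm⟩ with _ | v
  · refine Reach.mono (k := 1) ?_ (by omega)
    rw [← ext1 _ (fun x => ?_)]
    · exact stepC _ t a hta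
    · rw [mt_succ τ m hm, et, ea]; simp [hτ]
  · cases v with
    | true =>
      refine Reach.mono (k := 1) ?_ (by omega)
      rw [← ext1 _ (fun x => ?_)]
      · exact stepCC _ t a b hta htb
      · rw [mt_succ τ m hm, et, ea, eb]; simp [hτ]
    | false =>
      have r1 := stepC (stt (cc τ (m + 1)) h o) t a hta
      have r2 := stepCC (Function.update (stt (cc τ (m + 1)) h o) t
        (fun x => xor (stt (cc τ (m + 1)) h o t x) (stt (cc τ (m + 1)) h o a x))) t a b hta htb
      have r := r1.trans r2
      rw [Function.update_idem] at r
      rw [ext1 _ (fun x => ?_)] at r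
      · exact r
      · rw [Function.update_self, Function.update_of_ne hta.symm, Function.update_of_ne htb.symm,
          mt_succ τ m hm, et, ea, eb]
        simp [hτ]
        cases mt τ m x <;> cases x ⟨m, hm⟩ <;> rfl

theorem chain (τ : Fin n → Option Bool) (h : H → XX n → Bool) (o : O → XX n → Bool) :
    Reach (2 * n + 1) (stt (fun _ _ => false) h o) (stt (cc τ (n + 1)) h o) := by
  have key : ∀ m, m ≤ n →
      Reach (2 * m + 1) (stt (fun _ _ => false) h o) (stt (cc τ (m + 1)) h o) := by
    intro m
    induction m with
    | zero =>
      intro _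
      have r := stepNot (stt (fun _ _ => false) h o) (.inr (.inl (0 : Fin (n + 1))))
      convert r using 1
      simp only [stt, Sum.update_elim_inr, Sum.update_elim_inl]
      congr 2
      funext i x
      by_cases hi : i = 0
      · subst hi; simp [cc, mt]
      · simp only [Function.update_of_ne hi, cc]
        have : i.val ≠ 0 := fun h => hi (Fin.ext h)
        rw [if_neg (by omega)]
    | succ m ih =>
      intro hm
      exact (ih (by omega)).trans (chain_step τ m (by omega) h o)
  exact key n le_rfl

/-- pattern of a partial assignment -/
def pat (P : Fin n → Prop) [DecidablePred P] (z : {i // P i} → Bool) (i : Fin n) : Option Bool :=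
  if h : P i then some (z ⟨i, h⟩) else none

theorem mt_pat (P : Fin n → Prop) [DecidablePred P] (z : {i // P i} → Bool) (x : XX n) :
    mt (pat P z) n x = decide ((fun i : {i // P i} => x i.1) = z) := by
  rw [mt]
  congr 1
  apply propext
  constructor
  · intro h
    funext i
    exact h i.1 i.1.2 _ (by simp [pat, i.2])
  · intro h i _ b hb
    unfold pat at hb
    split_ifs at hb with hP
    simp only [Option.some.injEq] at hb
    rw [← hb, ← h]

/-- Control line. -/
abbrev lst (n : ℕ) (H O : Type) : Ln n H O := .inr (.inl (Fin.last n))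

theorem stt_lst (P : Fin n → Prop) [DecidablePred P] (z : {i // P i} → Bool)
    (h : H → XX n → Bool) (o : O → XX n → Bool) (x : XX n) :
    stt (cc (pat P z) (n + 1)) h o (lst n H O) x = decide ((fun i : {i // P i} => x i.1) = z) := by
  simp [stt, cc, mt_pat]

/-- conjugation -/
theorem sandwich (τ : Fin n → Option Bool) (h h' : H → XX n → Bool) (o o' : O → XX n → Bool) (k : ℕ)
    (r : Reach k (stt (cc τ (n + 1)) h o) (stt (cc τ (n + 1)) h' o')) :
    Reach (4 * n + 2 + k) (stt (fun _ _ => false) h o) (stt (fun _ _ => false) h' o') :=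
  (((chain τ h o).trans r).trans (chain τ h' o').symm).mono (by omega)

/-- Phase 1: prepare all functions `w a` of the low part. -/
theorem phase1 [Fintype H] (P : Fin n → Prop) [DecidablePred P]
    (w : H → ({i // P i} → Bool) → Bool) (o : O → XX n → Bool) :
    Reach (Fintype.card ({i // P i} → Bool) * (4 * n + 2 + Fintype.card H))
      (stt (H := H) (fun _ _ => false) (fun _ _ => false) o)
      (stt (fun _ _ => false) (fun a x => w a (fun i => x i.1)) o) := by
  have := Reach.loop (Finset.univ : Finset ({i // P i} → Bool))
    (fun G => stt (H := H) (fun _ _ => false)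
      (fun a x => decide ((fun i : {i // P i} => x i.1) ∈ G) && w a (fun i => x i.1)) o)
    (4 * n + 2 + Fintype.card H) ?_
  · simpa using this
  intro G z hz
  apply sandwich (pat P z)
  have := Reach.loop (Finset.univ : Finset H)
    (fun F => stt (H := H) (cc (pat P z) (n + 1))
      (fun a x => xor (decide ((fun i : {i // P i} => x i.1) ∈ G) && w a (fun i => x i.1))
        (decide (a ∈ F) && (decide ((fun i : {i // P i} => x i.1) = z) && w a z))) o) 1 ?_
  · simp only [Finset.card_univ, mul_one] at this
    convert this using 2
    · funext a x; simp
    · funext a x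
      by_cases hx : (fun i : {i // P i} => x i.1) = z
      · simp [hx, hz]
      · simp [hx]
  intro F a ha
  by_cases hw : w a z = true
  · convert stepC _ (.inr (.inr (.inl a))) (lst n H O) (by simp) using 1
    simp only [stt_lst]
    simp only [stt, Sum.update_elim_inr, Sum.update_elim_inl]
    congr 3
    funext a' x
    by_cases haa : a' = a
    · subst haa; simp [ha, hw]
    · simp [haa]
  · convert Reach.refl (Λ := Ln n H O) 1 _ using 2
    funext a' x
    by_cases haa : a' = a
    · subst haa; simp [hw]
    · simp [haa]

/-- Phase 2. -/
theorem phase2 [Fintype O] {J : Type} [Fintype J] [DecidableEq J] (P : Fin n → Prop) [DecidablePred P]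
    (hh : H → XX n → Bool) (f : XX n → O → Bool) (jj : XX n → J)
    (M : O → ({i // P i} → Bool) → J → H)
    (hM : ∀ i j x, hh (M i (fun i => x i.1) j) x = (decide (jj x = j) && f x i)) :
    Reach (Fintype.card ({i // P i} → Bool) * (4 * n + 2 + Fintype.card O * Fintype.card J))
      (stt (H := H) (fun _ _ => false) hh (fun _ _ => false))
      (stt (fun _ _ => false) hh (fun i x => f x i)) := by
  have := Reach.loop (Finset.univ : Finset ({i // P i} → Bool))
    (fun G => stt (H := H) (fun _ _ => false) hh
      (fun i x => decide ((fun i : {i // P i} => x i.1) ∈ G) && f x i))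
    (4 * n + 2 + Fintype.card O * Fintype.card J) ?_
  · simpa using this
  intro G z hz
  apply sandwich (pat P z)
  have := Reach.loop (Finset.univ : Finset (O × J))
    (fun F => stt (H := H) (cc (pat P z) (n + 1)) hh
      (fun i x => xor (decide ((fun i : {i // P i} => x i.1) ∈ G) && f x i)
        (decide ((i, jj x) ∈ F) && (decide ((fun i : {i // P i} => x i.1) = z) && f x i)))) 1 ?_
  · simp only [Finset.card_univ, mul_one, Fintype.card_prod] at this
    convert this using 2
    · funext a x; simp
    · funext a x
      by_cases hx : (fun i : {i // P i} => x i.1) = z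
      · simp [hx, hz]
      · simp [hx]
  rintro F ⟨i, j⟩ ha
  convert stepCC _ (.inr (.inr (.inr i))) (lst n H O) (.inr (.inr (.inl (M i z j))))
    (by simp) (by simp) using 1
  simp only [stt_lst]
  simp only [stt, Sum.update_elim_inr, Sum.elim_inr, Sum.elim_inl]
  congr 3
  funext i' x
  by_cases haa : i' = i
  · subst haa
    simp only [Function.update_self]
    by_cases hx : (fun i : {i // P i} => x i.1) = z
    · have := hM i' j x
      rw [hx] at this
      rw [this]
      by_cases hj : jj x = j
      · subst hj; simp [ha, hx]
      · simp [hj]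
    · simp [hx]
  · simp [haa]

end Con

theorem exists_perm {n N : ℕ} (hn : n ≤ N) (g : Fin n ↪ Fin N) :
    ∃ π : Equiv.Perm (Fin N), ∀ (j : Fin n) (hj : j.val < N), π ⟨j, hj⟩ = g j := by
  classical
  let e1 := Equiv.ofInjective (Fin.castLE hn) (Fin.castLE_injective hn)
  let e2 := Equiv.ofInjective g g.injective
  let e : {x // x ∈ Set.range (Fin.castLE hn)} ≃ {x // x ∈ Set.range g} := e1.symm.trans e2
  refine ⟨e.extendSubtype, fun j hj => ?_⟩
  have := e.extendSubtype_apply_of_mem (Fin.castLE hn j) ⟨j, rfl⟩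
  change e.extendSubtype (Fin.castLE hn j) = _
  rw [this]
  have : (⟨Fin.castLE hn j, ⟨j, rfl⟩⟩ : {x // x ∈ Set.range (Fin.castLE hn)}) = e1 j := rfl
  rw [this]
  simp [e, e2]

theorem main_circuit (n q p s : ℕ) (hs : 0 < s) (hp : p ≤ n)
    (mem : (n + 1) + ((2 ^ p / s + 1) * 2 ^ s + n) ≤ q) (f : (Fin n → Bool) → Fin n → Bool) :
    ∃ S : Circuit (n + q), Implements S f ∧ S.L ≤
      2 ^ p * (4 * n + 2 + (2 ^ p / s + 1) * 2 ^ s) +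
      2 ^ (n - p) * (4 * n + 2 + n * (2 ^ p / s + 1)) := by
  classical
  let J := Fin (2 ^ p / s + 1)
  let H := J × (Fin s → Bool)
  let P : Fin n → Prop := fun i => i.val < p
  let Q : Fin n → Prop := fun i => ¬ i.val < p
  have cP0 : Fintype.card {i // P i} = p := by
    simp only [P]
    rw [Fintype.card_subtype, Fin.card_filter_val_lt]; omega
  have cQ0 : Fintype.card {i // Q i} = n - p := by
    have := Fintype.card_subtype_compl (fun i : Fin n => i.val < p)
    simp only [P] at cP0
    rw [cP0] at this
    simpa [Q] using this
  have cP : Fintype.card ({i // P i} → Bool) = 2 ^ p := by simp [cP0]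
  have cQ : Fintype.card ({i // Q i} → Bool) = 2 ^ (n - p) := by simp [cQ0]
  have cH : Fintype.card H = (2 ^ p / s + 1) * 2 ^ s := by simp [H, J]
  let e : ({i // P i} → Bool) ≃ Fin (2 ^ p) := Fintype.equivFinOfCardEq cP
  let jz : ({i // P i} → Bool) → J := fun z =>
    ⟨(e z).val / s, Nat.lt_succ_of_le (Nat.div_le_div_right (e z).isLt.le)⟩
  let rz : ({i // P i} → Bool) → Fin s := fun z => ⟨(e z).val % s, Nat.mod_lt _ hs⟩
  let w : H → ({i // P i} → Bool) → Bool := fun a z => decide (jz z = a.1) && a.2 (rz z)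
  let lo : (Fin n → Bool) → {i // P i} → Bool := fun x i => x i.1
  let glue : ({i // P i} → Bool) → ({i // Q i} → Bool) → Fin n → Bool := fun z y i =>
    if h : P i then z ⟨i, h⟩ else y ⟨i, h⟩
  let M : Fin n → ({i // Q i} → Bool) → J → H := fun i y j =>
    (j, fun r => if h : j.val * s + r.val < 2 ^ p then f (glue (e.symm ⟨_, h⟩) y) i else false)
  have r1 := phase1 (H := H) (O := Fin n) P w (fun _ _ => false)
  have r2 := phase2 (H := H) (O := Fin n) (J := J) Q (fun a x => w a (lo x)) f
    (fun x => jz (lo x)) M ?_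
  swap
  · intro i j x
    simp only [w, M]
    by_cases hj : jz (lo x) = j
    · subst hj
      have e1 : (jz (lo x)).val * s + (rz (lo x)).val = (e (lo x)).val := by
        simp only [jz, rz]
        rw [mul_comm]; exact Nat.div_add_mod _ _
      have e2 : glue (lo x) (fun i => x i.1) = x := by
        funext i
        simp only [glue, lo]
        split_ifs <;> rfl
      simp only [e1, Fin.eta, Equiv.symm_apply_apply, e2]
      simp
    · simp [hj]
  have r := r1.trans r2
  rw [cP, cQ, cH, Fintype.card_fin, Fintype.card_fin] at r
  have cΛ : Fintype.card (Fin (n + 1) ⊕ (H ⊕ Fin n)) ≤ Fintype.card (Fin q) := by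
    simp only [Fintype.card_sum, cH, Fintype.card_fin]; exact mem
  obtain ⟨em⟩ := Function.Embedding.nonempty_of_card_le cΛ
  let ι : Ln n H (Fin n) ↪ Fin (n + q) :=
    ((Function.Embedding.refl _).sumMap em).trans finSumFinEquiv.toEmbedding
  obtain ⟨S, hS, hv⟩ := r.toCircuit ι
  refine ⟨S, ⟨by omega, ?_⟩, hS⟩
  let g : Fin n ↪ Fin (n + q) :=
    ⟨fun j => ι (.inr (.inr (.inr j))), fun a b h => by simpa using h⟩
  obtain ⟨π, hπ⟩ := exists_perm (by omega) g
  refine ⟨π, fun x j hj => ?_⟩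
  rw [hπ j hj]
  refine (hv x (pad x) ?_ _).trans ?_
  · rintro (i | i | i | i) <;> simp [ι, pad, stt]
  · simp [stt]

theorem Lsh_le (n q p s : ℕ) (hs : 0 < s) (hp : p ≤ n)
    (mem : (n + 1) + ((2 ^ p / s + 1) * 2 ^ s + n) ≤ q) :
    Lsh n q ≤ 2 ^ p * (4 * n + 2 + (2 ^ p / s + 1) * 2 ^ s) +
      2 ^ (n - p) * (4 * n + 2 + n * (2 ^ p / s + 1)) := by
  apply csSup_le'
  rintro l ⟨f, -, rfl⟩
  obtain ⟨S, h1, h2⟩ := main_circuit n q p s hs hp mem f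
  refine le_trans ?_ h2
  unfold Lmin
  exact Nat.sInf_le ⟨S, h1, rfl⟩

/-- numeric form -/
theorem Lsh_num (n q k : ℕ) (hk1 : 1 ≤ k) (hk : 7 * k ≤ n) (hn : n ≤ 2 ^ k)
    (hq : n * 2 ^ (n - k) ≤ q) :
    (Lsh n q : ℝ) / 2 ^ n ≤ (9 * n + 6) / n ^ 2 + n / (n - 6 * k) := by
  obtain ⟨s, rfl⟩ : ∃ s, n = s + 6 * k := ⟨n - 6 * k, by omega⟩
  have hs : 0 < s := by omega
  set n := s + 6 * k with hnd
  have hJ : 2 ^ (2 * k) / s + 1 ≤ 2 ^ (2 * k + 1) := by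
    have := Nat.div_le_self (2 ^ (2 * k)) s
    have := Nat.one_le_two_pow (n := 2 * k)
    rw [pow_succ]; omega
  have hJs : (2 ^ (2 * k) / s + 1) * 2 ^ s ≤ 2 ^ (s + 2 * k + 1) := by
    calc _ ≤ 2 ^ (2 * k + 1) * 2 ^ s := Nat.mul_le_mul_right _ hJ
      _ = _ := by rw [← pow_add]; congr 1; omega
  have main := Lsh_le n q (2 * k) s hs (by omega) (by
    have h1 : (2:ℕ) ^ (s + 2 * k + 1) ≤ 2 ^ (n - k) := Nat.pow_le_pow_right (by omega) (by omega)
    have h2 : 2 ^ k * 2 ^ 2 ≤ 2 ^ (n - k) := by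
      rw [← pow_add]; exact Nat.pow_le_pow_right (by omega) (by omega)
    have h3 : 2 * 2 ^ (n - k) ≤ n * 2 ^ (n - k) := Nat.mul_le_mul_right _ (by omega)
    omega)
  have hle : (Lsh n q : ℝ) ≤ 2 ^ (2 * k) * (4 * n + 2 + 2 ^ (s + 2 * k + 1)) +
      2 ^ (n - 2 * k) * (4 * n + 2 + n * (2 ^ (2 * k) / s + 1)) := by
    have h1 : (Lsh n q : ℝ) ≤ ((2 ^ (2 * k) * (4 * n + 2 + (2 ^ (2 * k) / s + 1) * 2 ^ s) +
      2 ^ (n - 2 * k) * (4 * n + 2 + n * (2 ^ (2 * k) / s + 1)) : ℕ) : ℝ) := by exact_mod_cast main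
    refine h1.trans ?_
    rw [Nat.cast_add, Nat.cast_mul, Nat.cast_mul]
    have h2 : (((2 ^ (2 * k) / s + 1) * 2 ^ s : ℕ) : ℝ) ≤ 2 ^ (s + 2 * k + 1) := by
      exact_mod_cast hJs
    have h3 : ((2 ^ (2 * k) / s : ℕ) : ℝ) ≤ 2 ^ (2 * k) / s := by
      refine Nat.cast_div_le.trans ?_
      simp
    rw [Nat.cast_add _ ((2 ^ (2 * k) / s + 1) * 2 ^ s)]
    push_cast at h2 h3 ⊢
    gcongr
  have hnpos : (0:ℝ) < n := by exact_mod_cast (by omega : 0 < n)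
  have hspos : (0:ℝ) < s := by exact_mod_cast hs
  have hns : (n : ℝ) - 6 * k = s := by rw [hnd]; push_cast; ring
  rw [hns, div_le_iff₀ (by positivity)]
  refine hle.trans ?_
  have e1 : (2:ℝ) ^ n = 2 ^ (n - 2 * k) * 2 ^ (2 * k) := by rw [← pow_add]; congr 1; omega
  have e2 : (2:ℝ) ^ (2 * k) * 2 ^ (s + 2 * k + 1) = 2 * 2 ^ (n - 2 * k) := by
    rw [← pow_add, ← pow_succ']; congr 1; omega
  have e3 : (2:ℝ) ^ (2 * k) ≤ 2 ^ (n - 2 * k) := pow_le_pow_right₀ (by norm_num) (by omega)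
  have e4 : (n:ℝ) ^ 2 ≤ 2 ^ (2 * k) := by
    rw [mul_comm, pow_mul]
    exact pow_le_pow_left₀ hnpos.le (by exact_mod_cast hn) 2
  set A : ℝ := 2 ^ (n - 2 * k)
  have hA : 0 < A := by positivity
  set B : ℝ := 2 ^ (2 * k)
  have e5 : (9 * n + 6) * A ≤ (9 * n + 6) / (n:ℝ) ^ 2 * (A * B) := by
    rw [div_mul_eq_mul_div, le_div_iff₀ (by positivity)]
    calc _ = (9 * n + 6) * (A * (n:ℝ) ^ 2) := by ring
      _ ≤ _ := by gcongr
  rw [e1, mul_add, e2, add_mul]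
  have e6 : A * (4 * n + 2 + n * (B / s + 1)) = (5 * n + 2) * A + n / s * (A * B) := by
    field_simp; ring
  rw [e6]
  have e7 : B * (4 * n + 2) ≤ A * (4 * n + 2) := by gcongr
  linarith

/-- For any growing functions `ψ` and `φ` with `φ(n) ≤ n / (log₂ n + log₂ ψ(n))` for
all sufficiently large `n`, there is a sequence `q₀(n) ~ n · 2^{n - ⌈n/φ(n)⌉}` with
`L(n, q₀(n)) ≲ 2ⁿ`. -/
theorem complexity_upper_with_memory (ψ φ : ℕ → ℝ) (hψ : Growing ψ) (hφ : Growing φ)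
    (hφψ : ∀ᶠ n in atTop, φ n ≤ (n : ℝ) / (Real.logb 2 n + Real.logb 2 (ψ n))) :
    ∃ q₀ : ℕ → ℕ,
      AsympEquiv (fun n => (q₀ n : ℝ)) (fun n => (n : ℝ) * pow2e φ n) ∧
      AsympLE (fun n => (Lsh n (q₀ n) : ℝ)) (fun n => (2 : ℝ) ^ n) := by
  obtain ⟨-, hψt⟩ := hψ
  obtain ⟨-, hφt⟩ := hφ
  set K : ℕ → ℕ := fun n => ⌈(n : ℝ) / φ n⌉.toNat with hK
  have hφinv : Tendsto (fun n => (φ n)⁻¹) atTop (nhds 0) := tendsto_inv_atTop_zero.comp hφt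
  have hninv : Tendsto (fun n : ℕ => (n : ℝ)⁻¹) atTop (nhds 0) :=
    tendsto_inv_atTop_zero.comp tendsto_natCast_atTop_atTop
  have hKc : ∀ᶠ n in atTop, ((K n : ℕ) : ℤ) = ⌈(n : ℝ) / φ n⌉ := by
    filter_upwards [hφt.eventually_gt_atTop 0] with n hn
    exact Int.toNat_of_nonneg (Int.ceil_nonneg (by positivity))
  have hKdiv : Tendsto (fun n => (K n : ℝ) / n) atTop (nhds 0) := by
    have hup : Tendsto (fun n : ℕ => (φ n)⁻¹ + (n : ℝ)⁻¹) atTop (nhds 0) := by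
      simpa using hφinv.add hninv
    refine squeeze_zero' (Eventually.of_forall fun n => by positivity) ?_ hup
    filter_upwards [hKc, eventually_gt_atTop 0] with n hn hn0
    have hn0' : (0:ℝ) < n := by exact_mod_cast hn0
    have h1 : (K n : ℝ) ≤ n / φ n + 1 := by
      have h2 : ((K n : ℤ) : ℝ) = (⌈(n : ℝ) / φ n⌉ : ℝ) := by rw [hn]
      have h3 := Int.ceil_lt_add_one ((n : ℝ) / φ n)
      rw [← h2] at h3
      simpa using h3.le
    rw [div_le_iff₀ hn0']
    refine h1.trans (le_of_eq ?_)
    field_simp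
  have hK7 : ∀ᶠ n in atTop, 7 * K n ≤ n := by
    filter_upwards [hKdiv.eventually_le_const (show (0:ℝ) < 1 / 7 by norm_num),
      eventually_gt_atTop 0] with n hn hn0
    have hn0' : (0:ℝ) < n := by exact_mod_cast hn0
    rw [div_le_iff₀ hn0'] at hn
    have : (7 * K n : ℝ) ≤ n := by linarith
    exact_mod_cast this
  have hKn : ∀ᶠ n in atTop, n ≤ 2 ^ K n := by
    filter_upwards [hKc, eventually_gt_atTop 1, hψt.eventually_ge_atTop 1,
      hφt.eventually_gt_atTop 0, hφψ] with n hn hn1 hψ1 hφ0 hle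
    have hn1' : (1:ℝ) < n := by exact_mod_cast hn1
    have l1 : 0 < Real.logb 2 n := Real.logb_pos (by norm_num) hn1'
    have l2 : 0 ≤ Real.logb 2 (ψ n) := Real.logb_nonneg (by norm_num) hψ1
    rw [le_div_iff₀ (by linarith)] at hle
    have l3 : Real.logb 2 n ≤ n / φ n := by
      rw [le_div_iff₀ hφ0]
      nlinarith
    have l4 : Real.logb 2 n ≤ K n := by
      refine l3.trans ((Int.le_ceil _).trans (le_of_eq ?_))
      rw [← hn]; simp
    have l5 : (n : ℝ) ≤ 2 ^ K n := by
      rw [Real.logb_le_iff_le_rpow (by norm_num) (by linarith)] at l4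
      simpa using l4
    exact_mod_cast l5
  have hpow : ∀ᶠ n in atTop, pow2e φ n = ((2 ^ (n - K n) : ℕ) : ℝ) := by
    filter_upwards [hKc, hK7] with n hn h7
    unfold pow2e
    rw [← hn, ← Nat.cast_sub (by omega)]
    simp
  refine ⟨fun n => n * 2 ^ (n - K n), ?_, ?_⟩
  · unfold AsympEquiv
    refine tendsto_const_nhds.congr' ?_
    filter_upwards [hpow, eventually_gt_atTop 0] with n hn hn0
    rw [hn]
    have hn0' : (0:ℝ) < n := by exact_mod_cast hn0
    push_cast
    rw [div_self (by positivity)]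
  · unfold AsympLE
    have hlim : Tendsto (fun n : ℕ => (9 * (n:ℝ) + 6) / n ^ 2 + n / (n - 6 * K n)) atTop (nhds 1) := by
      have a1 : Tendsto (fun n : ℕ => 9 * (n:ℝ)⁻¹ + 6 * ((n:ℝ)⁻¹ * (n:ℝ)⁻¹) +
          (1 - 6 * ((K n : ℝ) / n))⁻¹) atTop (nhds (9 * 0 + 6 * (0 * 0) + (1 - 6 * 0)⁻¹)) :=
        ((hninv.const_mul 9).add ((hninv.mul hninv).const_mul 6)).add
          ((tendsto_const_nhds.sub (hKdiv.const_mul 6)).inv₀ (by norm_num))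
      norm_num at a1
      refine a1.congr' ?_
      filter_upwards [eventually_gt_atTop 0, hK7] with n hn0 h7
      have hn0' : (0:ℝ) < n := by exact_mod_cast hn0
      have h7' : (7:ℝ) * K n ≤ n := by exact_mod_cast h7
      have : (0:ℝ) < n - 6 * K n := by
        have : (0:ℝ) ≤ K n := by positivity
        linarith
      have e : (1 - 6 * ((K n : ℝ) / n)) = (n - 6 * K n) / n := by field_simp
      rw [e, inv_div]
      congr 1
      field_simp
    rw [← hlim.limsup_eq]
    refine limsup_le_limsup ?_ ?_ hlim.isBoundedUnder_le
    · filter_upwards [hK7, hKn, eventually_gt_atTop 1] with n h7 h2 h1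
      refine Lsh_num n _ (K n) ?_ h7 h2 le_rfl
      rcases Nat.eq_zero_or_pos (K n) with h | h
      · rw [h] at h2; simp at h2; omega
      · exact h
    · exact (isBoundedUnder_of ⟨0, fun n => by positivity⟩ :
        IsBoundedUnder (· ≥ ·) atTop _).isCoboundedUnder_le

end Rev
end

section
/- Let ψ be any growing function and let φ be any growing function satisfying φ(n) ≤ n/(log₂ n + log₂ ψ(n)) for all sufficiently large n. Then there exists a sequence q₀(n) with q₀(n) ~ n·2^{n−⌈n/φ(n)⌉} such that W(n, q₀(n)) ≲ W^C·2^n + W^T·n·2^{n−⌈n/φ(n)⌉} as n → ∞. -/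
open Filter

namespace Rev

inductive Step {X : Type} : List (X → Bool) → List (X → Bool) → ℕ → ℕ → Prop
  | refl (L) : Step L L 0 0
  | fresh {L M c t} : Step L M c t → Step L (M ++ [fun _ => false]) c t
  | neg {L M g c t} : Step L (M ++ [g]) c t → Step L (M ++ [fun x => !(g x)]) (c+1) t
  | xor {L M g c t f} : Step L (M ++ [g]) c t → f ∈ M →
      Step L (M ++ [fun x => Bool.xor (g x) (f x)]) (c+1) t
  | and {L M g c t f₁ f₂} : Step L (M ++ [g]) c t → f₁ ∈ M → f₂ ∈ M →
      Step L (M ++ [fun x => Bool.xor (g x) (f₁ x && f₂ x)]) (c+1) (t+1)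

theorem Step.trans {X : Type} {L M K : List (X → Bool)} {c t c' t' : ℕ}
    (h₁ : Step L M c t) (h₂ : Step M K c' t') : Step L K (c+c') (t+t') := by
  induction h₂ with
  | refl => exact h₁
  | fresh _ ih => exact ih.fresh
  | neg _ ih => exact ih.neg
  | xor _ hf ih => exact ih.xor hf
  | and _ hf hg ih => exact ih.and hf hg

def HasState {X : Type} {N : ℕ} (ini : X → Fin N → Bool) (S : Circuit N)
    (L : List (X → Bool)) : Prop :=
  ∀ x i, Circuit.eval S (ini x) i = (L.getD i (fun _ => false)) x

theorem eval_snoc {N : ℕ} (S : Circuit N) (g : Gate N) (x : Fin N → Bool) :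
    Circuit.eval (S ++ [g]) x = g.apply (Circuit.eval S x) := by
  simp [Circuit.eval]

theorem LC_snoc {N : ℕ} (S : Circuit N) (g : Gate N) :
    Circuit.LC (S ++ [g]) ≤ Circuit.LC S + 1 := by
  simp only [Circuit.LC, List.filter_append, List.length_append]
  have := List.length_filter_le (fun g : Gate N => decide (g.I.card ≤ 1)) [g]
  simp only [List.length_singleton] at this
  omega

theorem LT_snoc {N : ℕ} (S : Circuit N) (g : Gate N) :
    Circuit.LT (S ++ [g]) ≤ Circuit.LT S + 1 := by
  simp only [Circuit.LT, List.filter_append, List.length_append]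
  have := List.length_filter_le (fun g : Gate N => decide (g.I.card = 2)) [g]
  simp only [List.length_singleton] at this
  omega

theorem LT_snoc' {N : ℕ} (S : Circuit N) (g : Gate N) (h : g.I.card ≤ 1) :
    Circuit.LT (S ++ [g]) = Circuit.LT S := by
  have : g.I.card ≠ 2 := by omega
  simp [Circuit.LT, List.filter_append, this]

theorem getD_snoc_lt {α : Type} (M : List α) (g z : α) (i : ℕ) (h : i ≠ M.length) :
    (M ++ [g]).getD i z = M.getD i z := by
  rcases lt_or_gt_of_ne h with h | h
  · rw [List.getD_append _ _ _ _ h]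
  · rw [List.getD_eq_default _ _ (by simp; omega), List.getD_eq_default _ _ (by omega)]

theorem getD_snoc_eq {α : Type} (M : List α) (g z : α) :
    (M ++ [g]).getD M.length z = g := by
  simp

theorem exists_line {X : Type} {N : ℕ} {ini : X → Fin N → Bool} {S : Circuit N}
    {M : List (X → Bool)} {g : X → Bool} (h : HasState ini S (M ++ [g]))
    (hN : (M ++ [g]).length ≤ N) {f : X → Bool} (hf : f ∈ M) :
    ∃ i : Fin N, (i : ℕ) < M.length ∧ ∀ x, Circuit.eval S (ini x) i = f x := by
  obtain ⟨i, hi, rfl⟩ := List.getElem_of_mem hf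
  simp at hN
  refine ⟨⟨i, by omega⟩, hi, fun x => ?_⟩
  rw [h x]
  simp only
  rw [getD_snoc_lt _ _ _ _ (by omega), List.getD_eq_getElem _ _ hi]

theorem hasState_gate {X : Type} {N : ℕ} {ini : X → Fin N → Bool} {S : Circuit N}
    {M : List (X → Bool)} {g : X → Bool} (h : HasState ini S (M ++ [g]))
    (hN : (M ++ [g]).length ≤ N) (I : Finset (Fin N)) (hI : I.card ≤ 2)
    (hlt : ∀ i ∈ I, (i : ℕ) < M.length) (g' : X → Bool)
    (hg : ∀ x, g' x = Bool.xor (g x) (decide (∀ i ∈ I, Circuit.eval S (ini x) i = true))) :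
    ∃ G : Gate N, G.I = I ∧ HasState ini (S ++ [G]) (M ++ [g']) := by
  simp at hN
  refine ⟨⟨I, ⟨M.length, by omega⟩, hI, fun hh => by have := hlt _ hh; simp at this⟩, rfl, ?_⟩
  intro x i
  rw [eval_snoc]
  simp only [Gate.apply]
  split_ifs with hi
  · subst hi
    rw [h x]
    simp only
    rw [getD_snoc_eq, getD_snoc_eq, hg]
  · have : (i : ℕ) ≠ M.length := fun e => hi (Fin.ext e)
    rw [h x, getD_snoc_lt _ _ _ _ this, getD_snoc_lt _ _ _ _ this]

theorem Step.sim {X : Type} {N : ℕ} (ini : X → Fin N → Bool) {L M : List (X → Bool)} {c t : ℕ}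
    (h : Step L M c t) (h0 : HasState ini [] L) (hN : M.length ≤ N) :
    ∃ S : Circuit N, HasState ini S M ∧ S.LC ≤ c ∧ S.LT ≤ t := by
  induction h with
  | refl => exact ⟨[], h0, by simp [Circuit.LC], by simp [Circuit.LT]⟩
  | @fresh M c t _ ih =>
    obtain ⟨S, h1, h2, h3⟩ := ih (by simp at hN; omega)
    refine ⟨S, fun x i => ?_, h2, h3⟩
    rw [h1 x]
    by_cases e : (i : ℕ) = M.length
    · rw [e, getD_snoc_eq]; simp
    · rw [getD_snoc_lt _ _ _ _ e]
  | @neg M g c t _ ih =>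
    have hN' : (M ++ [g]).length ≤ N := by simpa using hN
    obtain ⟨S, h1, h2, h3⟩ := ih hN'
    obtain ⟨G, hG, hS⟩ := hasState_gate h1 hN' ∅ (by simp) (by simp) (fun x => !(g x)) (by simp)
    refine ⟨S ++ [G], hS, (LC_snoc _ _).trans (by omega), ?_⟩
    rw [LT_snoc' _ _ (by simp [hG])]; exact h3
  | @xor M g c t f _ hf ih =>
    have hN' : (M ++ [g]).length ≤ N := by simpa using hN
    obtain ⟨S, h1, h2, h3⟩ := ih hN'
    obtain ⟨i, hi, he⟩ := exists_line h1 hN' hf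
    obtain ⟨G, hG, hS⟩ := hasState_gate h1 hN' {i} (by simp) (by simpa using hi)
      (fun x => Bool.xor (g x) (f x)) (by simp [he])
    refine ⟨S ++ [G], hS, (LC_snoc _ _).trans (by omega), ?_⟩
    rw [LT_snoc' _ _ (by simp [hG])]; exact h3
  | @and M g c t f₁ f₂ _ hf₁ hf₂ ih =>
    have hN' : (M ++ [g]).length ≤ N := by simpa using hN
    obtain ⟨S, h1, h2, h3⟩ := ih hN'
    obtain ⟨i, hi, he⟩ := exists_line h1 hN' hf₁
    obtain ⟨j, hj, hf⟩ := exists_line h1 hN' hf₂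
    obtain ⟨G, hG, hS⟩ := hasState_gate h1 hN' {i, j} Finset.card_le_two (by simp [hi, hj])
      (fun x => Bool.xor (g x) (f₁ x && f₂ x)) (by simp [he, hf])
    exact ⟨S ++ [G], hS, (LC_snoc _ _).trans (by omega), (LT_snoc _ _).trans (by omega)⟩

/-- From any list containing `A` one can extend to a list containing also `B`. -/
def Comp {X : Type} (A B : Set (X → Bool)) (l c t : ℕ) : Prop :=
  ∀ L : List (X → Bool), (∀ f ∈ A, f ∈ L) → ∃ L' c' t', Step L L' c' t' ∧ c' ≤ c ∧ t' ≤ t ∧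
    L'.length ≤ L.length + l ∧ (∀ f ∈ L, f ∈ L') ∧ ∀ f ∈ B, f ∈ L'

theorem Comp.mono {X : Type} {A A' B B' : Set (X → Bool)} {l c t l' c' t' : ℕ}
    (h : Comp A B l c t) (hA : A ⊆ A') (hB : B' ⊆ B) (hl : l ≤ l') (hc : c ≤ c') (ht : t ≤ t') :
    Comp A' B' l' c' t' := by
  intro L hL
  obtain ⟨L', c₁, t₁, h1, h2, h3, h4, h5, h6⟩ := h L (fun f hf => hL f (hA hf))
  exact ⟨L', c₁, t₁, h1, by omega, by omega, by omega, h5, fun f hf => h6 f (hB hf)⟩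

theorem Comp.trans {X : Type} {A B C : Set (X → Bool)} {l c t l' c' t' : ℕ}
    (h : Comp A B l c t) (h' : Comp (A ∪ B) C l' c' t') :
    Comp A (B ∪ C) (l+l') (c+c') (t+t') := by
  intro L hL
  obtain ⟨L₁, c₁, t₁, h1, h2, h3, h4, h5, h6⟩ := h L hL
  obtain ⟨L₂, c₂, t₂, k1, k2, k3, k4, k5, k6⟩ := h' L₁ (by
    rintro f (hf | hf)
    · exact h5 f (hL f hf)
    · exact h6 f hf)
  refine ⟨L₂, _, _, h1.trans k1, by omega, by omega, by omega, fun f hf => k5 f (h5 f hf), ?_⟩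
  rintro f (hf | hf)
  · exact k5 f (h6 f hf)
  · exact k6 f hf

theorem Comp.biUnion {X ι : Type} {A : Set (X → Bool)} (s : Finset ι) (B : ι → Set (X → Bool))
    {l c t : ℕ} (h : ∀ i ∈ s, Comp A (B i) l c t) :
    Comp A (⋃ i ∈ s, B i) (s.card * l) (s.card * c) (s.card * t) := by
  classical
  induction s using Finset.induction_on with
  | empty => exact fun L _ => ⟨L, 0, 0, .refl L, by simp, by simp, by simp, by simp, by simp⟩
  | insert a s ha ih =>
    have h1 := h a (by simp)
    have h2 := ih (fun i hi => h i (by simp [hi]))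
    have h3 := h1.trans (h2.mono (A' := A ∪ B a) Set.subset_union_left subset_rfl le_rfl le_rfl le_rfl)
    rw [Finset.set_biUnion_insert, Finset.card_insert_of_notMem ha]
    exact h3.mono subset_rfl subset_rfl (by nlinarith) (by nlinarith) (by nlinarith)

theorem Comp.range {X ι : Type} [Fintype ι] {A : Set (X → Bool)} (g : ι → X → Bool)
    {l c t : ℕ} (h : ∀ i, Comp A {g i} l c t) :
    Comp A (Set.range g) (Fintype.card ι * l) (Fintype.card ι * c) (Fintype.card ι * t) := by
  refine (Comp.biUnion Finset.univ (fun i => {g i}) (fun i _ => h i)).mono subset_rfl ?_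
    le_rfl le_rfl le_rfl
  rintro _ ⟨i, rfl⟩
  simp

theorem Comp.of_mem {X : Type} {A B : Set (X → Bool)} (h : B ⊆ A) (l c t : ℕ) :
    Comp A B l c t :=
  fun L hL => ⟨L, 0, 0, .refl L, by simp, by simp, by simp, fun f hf => hf, fun f hf => hL f (h hf)⟩

theorem Comp.const {X : Type} (A : Set (X → Bool)) : Comp A {fun _ => true} 1 1 0 := by
  intro L _
  refine ⟨_, _, _, (Step.refl L).fresh.neg, by simp, by simp, by simp, ?_, ?_⟩
  · intro f hf; simp [hf]
  · rintro f rfl; simp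

theorem Comp.not {X : Type} {A : Set (X → Bool)} {f : X → Bool} (hf : f ∈ A) :
    Comp A {fun x => !(f x)} 1 2 0 := by
  intro L hL
  refine ⟨_, _, _, ((Step.refl L).fresh.xor (hL f hf)).neg, by simp, by simp, by simp, ?_, ?_⟩
  · intro f hf; simp [hf]
  · rintro f rfl; simp

theorem Comp.and {X : Type} {A : Set (X → Bool)} {f g : X → Bool} (hf : f ∈ A) (hg : g ∈ A) :
    Comp A {fun x => f x && g x} 1 1 1 := by
  intro L hL
  refine ⟨_, _, _, ((Step.refl L).fresh.and (hL f hf) (hL g hg)), by simp, by simp, by simp, ?_, ?_⟩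
  · intro f hf; simp [hf]
  · rintro f rfl; simp

theorem Comp.sum {X ι : Type} {A : Set (X → Bool)} (s : Finset ι) (g : ι → X → Bool)
    (hg : ∀ i ∈ s, g i ∈ A)
    (hd : ∀ x, ∀ i ∈ s, ∀ j ∈ s, g i x = true → g j x = true → i = j) (r : X → Bool)
    (hr : ∀ x, r x = true ↔ ∃ i ∈ s, g i x = true) :
    Comp A {r} 1 s.card 0 := by
  classical
  intro L hL
  suffices H : Step L (L ++ [fun x => decide (∃ i ∈ s, g i x = true)]) s.card 0 by
    refine ⟨_, _, _, H, le_rfl, le_rfl, by simp, fun f hf => by simp [hf], ?_⟩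
    rintro f rfl
    have : f = fun x => decide (∃ i ∈ s, g i x = true) := by
      funext x
      rw [Bool.eq_iff_iff, hr]; simp
    rw [← this]; simp
  clear hr
  induction s using Finset.induction_on with
  | empty => simpa using (Step.refl L).fresh
  | insert a s ha ih =>
    have h2 := ih (fun i hi => hg i (by simp [hi]))
      (fun x i hi j hj => hd x i (by simp [hi]) j (by simp [hj]))
    have h3 := h2.xor (hL _ (hg a (by simp)))
    rw [Finset.card_insert_of_notMem ha]
    convert h3 using 4 with x
    rw [Bool.eq_iff_iff]
    by_cases h : g a x = true
    · have : ∀ i ∈ s, g i x = false := by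
        intro i hi
        by_contra hh
        have := hd x a (by simp) i (by simp [hi]) h (by simpa using hh)
        exact ha (this ▸ hi)
      simp +contextual [h, this]
    · simp [h]

theorem Comp.sumAnd {X ι : Type} {A : Set (X → Bool)} (s : Finset ι) (g h₀ : ι → X → Bool)
    (hg : ∀ i ∈ s, g i ∈ A) (hh : ∀ i ∈ s, h₀ i ∈ A)
    (hd : ∀ x, ∀ i ∈ s, ∀ j ∈ s, g i x = true → g j x = true → i = j) (r : X → Bool)
    (hr : ∀ x, r x = true ↔ ∃ i ∈ s, g i x = true ∧ h₀ i x = true) :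
    Comp A {r} 1 s.card s.card := by
  classical
  intro L hL
  suffices H : Step L (L ++ [fun x => decide (∃ i ∈ s, g i x = true ∧ h₀ i x = true)])
      s.card s.card by
    refine ⟨_, _, _, H, le_rfl, le_rfl, by simp, fun f hf => by simp [hf], ?_⟩
    rintro f rfl
    have : f = fun x => decide (∃ i ∈ s, g i x = true ∧ h₀ i x = true) := by
      funext x
      rw [Bool.eq_iff_iff, hr]; simp
    rw [← this]; simp
  clear hr
  induction s using Finset.induction_on with
  | empty => simpa using (Step.refl L).fresh
  | insert a s ha ih =>
    have h2 := ih (fun i hi => hg i (by simp [hi])) (fun i hi => hh i (by simp [hi]))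
      (fun x i hi j hj => hd x i (by simp [hi]) j (by simp [hj]))
    have h3 := h2.and (hL _ (hg a (by simp))) (hL _ (hh a (by simp)))
    rw [Finset.card_insert_of_notMem ha]
    convert h3 using 4 with x
    rw [Bool.eq_iff_iff]
    by_cases h : g a x = true
    · have : ∀ i ∈ s, g i x = false := by
        intro i hi
        by_contra hh
        have := hd x a (by simp) i (by simp [hi]) h (by simpa using hh)
        exact ha (this ▸ hi)
      have e : ¬ ∃ i ∈ s, g i x = true ∧ h₀ i x = true := by
        rintro ⟨i, hi, hi', -⟩
        simp [this i hi] at hi'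
      simp [h, e]
    · simp [h]

theorem Comp.minterms {X : Type} {A : Set (X → Bool)} (ht : (fun _ => true) ∈ A) (d : ℕ)
    (v : Fin d → X → Bool) (hv : ∀ i, v i ∈ A) (hn : ∀ i, (fun x => !(v i x)) ∈ A) :
    Comp A (Set.range fun σ : Fin d → Bool => fun x => decide (∀ j, v j x = σ j))
      (2^(d+1)) (2^(d+1)) (2^(d+1)) := by
  induction d with
  | zero =>
    apply Comp.of_mem
    rintro _ ⟨σ, rfl⟩
    simpa using ht
  | succ d ih =>
    have h1 := ih (fun i => v i.castSucc) (fun i => hv _) (fun i => hn _)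
    have h2 := Comp.range (A := A ∪ (Set.range fun σ : Fin d → Bool => fun x =>
        decide (∀ j : Fin d, v j.castSucc x = σ j)))
      (fun σ : Fin (d+1) → Bool => fun x => decide (∀ j, v j x = σ j)) (l := 1) (c := 1) (t := 1) (by
        intro σ
        have ha : (fun x => decide (∀ j : Fin d, v j.castSucc x = σ j.castSucc)) ∈
          A ∪ (Set.range fun σ : Fin d → Bool => fun x =>
            decide (∀ j : Fin d, v j.castSucc x = σ j)) := Or.inr ⟨fun j => σ j.castSucc, rfl⟩
        have hb : (fun x => v (Fin.last d) x == σ (Fin.last d)) ∈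
          A ∪ (Set.range fun σ : Fin d → Bool => fun x =>
            decide (∀ j : Fin d, v j.castSucc x = σ j)) := by
          left
          cases σ (Fin.last d)
          · simpa using hn (Fin.last d)
          · simpa using hv (Fin.last d)
        refine (Comp.and ha hb).mono subset_rfl ?_ le_rfl le_rfl le_rfl
        rintro _ rfl
        rw [Set.mem_singleton_iff]
        funext x
        rw [Bool.eq_iff_iff]
        simp [Fin.forall_fin_succ'])
    refine (h1.trans h2).mono subset_rfl Set.subset_union_right ?_ ?_ ?_ <;>
    · simp; ring_nf; rfl

theorem Step.copy {X : Type} (L : List (X → Bool)) (F : List (X → Bool)) (h : ∀ f ∈ F, f ∈ L) :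
    Step L (L ++ F) F.length 0 := by
  induction F using List.reverseRecOn with
  | nil => simpa using Step.refl L
  | append_singleton F f ih =>
    have h1 := (ih (fun f hf => h f (by simp [hf]))).fresh.xor (f := f)
      (by simp [h f (by simp)])
    simpa [← List.append_assoc] using h1

end Rev

namespace Rev

theorem group_card (k s : ℕ) (hs : 0 < s) (e : (Fin k → Bool) ≃ Fin (2^k)) (i : ℕ) :
    (Finset.univ.filter fun σ => (e σ : ℕ) / s = i).card ≤ s := by
  rw [← Finset.card_range s]
  apply Finset.card_le_card_of_injOn (fun σ => (e σ : ℕ) % s)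
  · intro σ _
    simpa using Nat.mod_lt _ (by simpa using hs)
  · intro σ h τ h' hh
    simp at h h' hh
    apply e.injective
    apply Fin.ext
    rw [← Nat.div_add_mod (e σ : ℕ) s, ← Nat.div_add_mod (e τ : ℕ) s, h, h', hh]

def inputs (n : ℕ) : Set ((Fin n → Bool) → Bool) := Set.range fun i => fun x => x i

theorem comp_main (k d s : ℕ) (hs : 0 < s) (f : (Fin (k+d) → Bool) → Fin (k+d) → Bool) :
    Comp (inputs (k+d)) (Set.range fun j => fun x => f x j)
      (1 + ((k+d) + (2^(k+1) + (2^(d+1) + ((2^k/s+1)*2^s + ((k+d)*2^d + (k+d)))))))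
      (1 + ((k+d)*2 + (2^(k+1) + (2^(d+1) + ((2^k/s+1)*(2^s*s) +
        ((k+d)*2^d*(2^k/s+1) + (k+d)*2^d))))))
      (2^(k+1) + (2^(d+1) + (k+d)*2^d)) := by
  classical
  let e : (Fin k → Bool) ≃ Fin (2^k) := Fintype.equivFinOfCardEq (by simp)
  let y : (Fin (k+d) → Bool) → Fin k → Bool := fun x j => x (Fin.castAdd d j)
  let z : (Fin (k+d) → Bool) → Fin d → Bool := fun x j => x (Fin.natAdd k j)
  let grp : Fin (2^k/s+1) → Finset (Fin k → Bool) :=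
    fun i => Finset.univ.filter fun σ => (e σ : ℕ) / s = i
  have hgrp : ∀ σ, ∃ i, σ ∈ grp i := by
    intro σ
    refine ⟨⟨(e σ : ℕ) / s, ?_⟩, by simp [grp]⟩
    exact Nat.lt_succ_of_le (Nat.div_le_div_right (e σ).2.le)
  have hgrp' : ∀ σ i j, σ ∈ grp i → σ ∈ grp j → i = j := by
    intro σ i j h h'
    simp [grp] at h h'
    exact Fin.ext (h.symm.trans h')
  let K : (Fin k → Bool) → (Fin (k+d) → Bool) → Bool := fun σ x => decide (∀ j, y x j = σ j)
  let Z : (Fin d → Bool) → (Fin (k+d) → Bool) → Bool := fun a x => decide (∀ j, z x j = a j)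
  have hK : ∀ σ x, K σ x = true ↔ y x = σ := by intro σ x; simp [K, funext_iff]
  have hZ : ∀ a x, Z a x = true ↔ z x = a := by intro a x; simp [Z, funext_iff]
  let G : Finset (Fin k → Bool) → (Fin (k+d) → Bool) → Bool := fun T x => decide (y x ∈ T)
  let H : Fin (k+d) × (Fin d → Bool) → (Fin (k+d) → Bool) → Bool :=
    fun p x => f (Fin.append (y x) p.2) p.1
  have hf : ∀ x, Fin.append (y x) (z x) = x := by
    intro x; funext i
    refine Fin.addCases (fun i => ?_) (fun i => ?_) i <;> simp [y, z]
  set A0 := inputs (k+d)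
  have s1 : Comp A0 {fun _ => true} 1 1 0 := Comp.const A0
  set A1 := A0 ∪ {fun _ => true}
  have s2 : Comp A1 (Set.range fun i => fun x : Fin (k+d) → Bool => !(x i))
      (k+d) ((k+d)*2) 0 := by
    have := Comp.range (A := A1) (fun i => fun x : Fin (k+d) → Bool => !(x i)) (l := 1) (c := 2)
      (t := 0) (fun i => Comp.not (Or.inl ⟨i, rfl⟩))
    simpa using this
  set A2 := A1 ∪ (Set.range fun i => fun x : Fin (k+d) → Bool => !(x i))
  have i2 : ∀ i, (fun x : Fin (k+d) → Bool => x i) ∈ A2 := fun i => Or.inl (Or.inl ⟨i, rfl⟩)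
  have n2 : ∀ i, (fun x : Fin (k+d) → Bool => !(x i)) ∈ A2 := fun i => Or.inr ⟨i, rfl⟩
  have t2 : (fun _ => true) ∈ A2 := Or.inl (Or.inr rfl)
  have s3 : Comp A2 (Set.range K) (2^(k+1)) (2^(k+1)) (2^(k+1)) :=
    Comp.minterms t2 k (fun j x => y x j) (fun i => i2 _) (fun i => n2 _)
  set A3 := A2 ∪ Set.range K
  have s4 : Comp A3 (Set.range Z) (2^(d+1)) (2^(d+1)) (2^(d+1)) :=
    Comp.minterms (Or.inl t2) d (fun j x => z x j) (fun i => Or.inl (i2 _))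
      (fun i => Or.inl (n2 _))
  set A4 := A3 ∪ Set.range Z
  have s5 : Comp A4 (⋃ i ∈ (Finset.univ : Finset (Fin (2^k/s+1))), ⋃ T ∈ (grp i).powerset, {G T})
      ((2^k/s+1)*2^s) ((2^k/s+1)*(2^s*s)) 0 := by
    have := Comp.biUnion (A := A4) (Finset.univ : Finset (Fin (2^k/s+1)))
      (fun i => ⋃ T ∈ (grp i).powerset, {G T}) (l := 2^s) (c := 2^s*s) (t := 0) (by
        intro i _
        have hc : (grp i).card ≤ s := group_card k s hs e i
        have hc' : (grp i).powerset.card ≤ 2^s := by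
          rw [Finset.card_powerset]
          exact Nat.pow_le_pow_right (by norm_num) hc
        refine (Comp.biUnion (A := A4) (grp i).powerset (fun T => {G T}) (l := 1) (c := s) (t := 0)
          ?_).mono subset_rfl subset_rfl ?_ ?_ ?_
        · intro T hT
          refine (Comp.sum T K ?_ ?_ (G T) ?_).mono subset_rfl subset_rfl le_rfl
            ((Finset.card_le_card (Finset.mem_powerset.1 hT)).trans hc) le_rfl
          · intro σ _; exact Or.inl (Or.inr ⟨σ, rfl⟩)
          · intro x σ _ τ _ h h'
            rw [hK] at h h'; rw [← h, ← h']
          · intro x; simp [G, hK]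
        · simpa using hc'
        · exact Nat.mul_le_mul_right _ hc'
        · simp)
    simpa using this
  set A5 := A4 ∪ (⋃ i ∈ (Finset.univ : Finset (Fin (2^k/s+1))), ⋃ T ∈ (grp i).powerset, {G T})
  have s6 : Comp A5 (Set.range H) ((k+d)*2^d) ((k+d)*2^d*(2^k/s+1)) 0 := by
    have := Comp.range (A := A5) H (l := 1) (c := 2^k/s+1) (t := 0) (by
      intro p
      have := Comp.sum (A := A5) Finset.univ
        (fun i => G ((grp i).filter fun σ => f (Fin.append σ p.2) p.1 = true)) ?_ ?_ (H p) ?_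
      · simpa using this
      · intro i _
        right
        simp only [Set.mem_iUnion]
        refine ⟨i, Finset.mem_univ _, _, ?_, rfl⟩
        simp
      · intro x i _ j _ h h'
        simp only [G, decide_eq_true_eq, Finset.mem_filter] at h h'
        exact hgrp' _ _ _ h.1 h'.1
      · intro x
        simp only [G, H, decide_eq_true_eq, Finset.mem_filter, Finset.mem_univ, true_and]
        obtain ⟨i, hi⟩ := hgrp (y x)
        exact ⟨fun h => ⟨i, hi, h⟩, fun ⟨_, _, h⟩ => h⟩)
    simpa using this
  set A6 := A5 ∪ Set.range H
  have s7 : Comp A6 (Set.range fun j => fun x => f x j) (k+d) ((k+d)*2^d) ((k+d)*2^d) := by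
    have := Comp.range (A := A6) (fun j => fun x => f x j) (l := 1) (c := 2^d) (t := 2^d) (by
      intro j
      have := Comp.sumAnd (A := A6) Finset.univ Z (fun a => H (j, a)) ?_ ?_ ?_
        (fun x => f x j) ?_
      · simpa using this
      · intro a _
        exact Or.inl (Or.inl (Or.inr ⟨a, rfl⟩))
      · intro a _
        exact Or.inr ⟨(j, a), rfl⟩
      · intro x a _ b _ h h'
        rw [hZ] at h h'; rw [← h, ← h']
      · intro x
        simp [hZ, H, hf])
    simpa using this
  have := s1.trans (s2.trans (s3.trans (s4.trans (s5.trans (s6.trans s7)))))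
  refine this.mono subset_rfl ?_ le_rfl le_rfl (by omega)
  intro g hg
  simp only [Set.mem_union]
  tauto

def QQ (k d s : ℕ) : ℕ :=
  (1 + ((k+d) + (2^(k+1) + (2^(d+1) + ((2^k/s+1)*2^s + ((k+d)*2^d + (k+d))))))) + (k+d)
def CC (k d s : ℕ) : ℕ :=
  (1 + ((k+d)*2 + (2^(k+1) + (2^(d+1) + ((2^k/s+1)*(2^s*s) +
        ((k+d)*2^d*(2^k/s+1) + (k+d)*2^d)))))) + (k+d)
def TT (k d : ℕ) : ℕ := (2^(k+1) + (2^(d+1) + (k+d)*2^d))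

theorem circuit_main (k d s q : ℕ) (hs : 0 < s) (hq : q = QQ k d s)
    (f : (Fin (k+d) → Bool) → Fin (k+d) → Bool) :
    ∃ S : Circuit (k+d+q), Implements S f ∧ S.LC ≤ CC k d s ∧ S.LT ≤ TT k d := by
  let L0 : List ((Fin (k+d) → Bool) → Bool) := List.ofFn fun i => fun x => x i
  obtain ⟨L, c, t, h1, h2, h3, h4, h5, h6⟩ := comp_main k d s hs f L0 (by
    rintro _ ⟨i, rfl⟩
    simp [L0, List.mem_ofFn])
  have h7 := h1.trans (Step.copy L (List.ofFn fun j => fun x => f x j) (by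
    intro g hg
    rw [List.mem_ofFn] at hg
    exact h6 g hg))
  have hlen : L.length + (k+d) ≤ k+d+q := by
    simp only [L0, List.length_ofFn] at h4
    rw [hq, QQ]; omega
  obtain ⟨S, hS, hc, ht⟩ := h7.sim (N := k+d+q) (fun x => pad x) (by
    intro x i
    simp only [Circuit.eval, List.foldl_nil, pad]
    split_ifs with h
    · rw [List.getD_eq_getElem _ _ (by simpa [L0] using h)]
      simp [L0]
    · rw [List.getD_eq_default _ _ (by simp [L0]; omega)]) (by simpa using hlen)
  refine ⟨S, ⟨by omega, ?_⟩, ?_, ?_⟩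
  · rcases Nat.eq_zero_or_pos (k+d) with h0 | h0
    · refine ⟨Equiv.refl _, fun x j => absurd j.2 (by omega)⟩
    have : NeZero (k+d+q) := ⟨by omega⟩
    refine ⟨Equiv.addRight (⟨L.length, by omega⟩ : Fin (k+d+q)), fun x j hj => ?_⟩
    rw [hS x]
    have hj' := j.2
    have : (((Equiv.addRight (⟨L.length, by omega⟩ : Fin (k+d+q))) ⟨j, hj⟩ : Fin (k+d+q)) : ℕ)
        = L.length + j := by
      simp only [Equiv.coe_addRight, Fin.val_add]
      rw [Nat.mod_eq_of_lt (by omega), add_comm]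
    rw [this, List.getD_append_right _ _ _ _ (by omega), List.getD_eq_getElem _ _ (by simp)]
    simp
  · simp at hc; rw [CC]; omega
  · rw [TT]; omega

theorem Wsh_le (WC WT : ℝ) (hWC : 0 < WC) (hWT : 0 < WT) (k d s n q : ℕ) (hn : n = k + d)
    (hs : 0 < s) (hq : q = QQ k d s) :
    Wsh WC WT n q ≤ WC * CC k d s + WT * TT k d := by
  subst hn
  have hW : ∀ {N} (S : Circuit N), 0 ≤ Circuit.W WC WT S := fun S => by
    unfold Circuit.W; positivity
  apply Real.sSup_le
  · rintro w ⟨f, -, rfl⟩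
    obtain ⟨S, h1, h2, h3⟩ := circuit_main k d s q hs hq f
    have hb : BddBelow {w | ∃ S : Circuit (k+d+q), Implements S f ∧ Circuit.W WC WT S = w} := by
      refine ⟨0, ?_⟩
      rintro _ ⟨S, -, rfl⟩; exact hW S
    refine (csInf_le hb ⟨S, h1, rfl⟩).trans ?_
    · unfold Circuit.W
      gcongr
  · positivity

theorem Wsh_nonneg (WC WT : ℝ) (hWC : 0 < WC) (hWT : 0 < WT) (n q : ℕ) :
    0 ≤ Wsh WC WT n q := by
  apply Real.sSup_nonneg
  rintro w ⟨f, -, rfl⟩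
  apply Real.sInf_nonneg
  rintro _ ⟨S, -, rfl⟩
  unfold Circuit.W; positivity

end Rev

namespace Rev

theorem QQ_le (k d s : ℕ) (hd : d = k + s) (hn : k + d ≤ 2^k) :
    QQ k d s ≤ (k+d)*2^d + 10*2^d := by
  have h1 : 2^k/s ≤ 2^k := Nat.div_le_self _ _
  have h2 : 2^k*2^s = 2^d := by rw [hd, pow_add]
  have h3 : 2^k ≤ 2^d := Nat.pow_le_pow_right (by norm_num) (by omega)
  have h4 : 2^s ≤ 2^d := Nat.pow_le_pow_right (by norm_num) (by omega)
  have h5 : (2^k/s+1)*2^s ≤ 2^d + 2^s := by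
    rw [← h2, add_mul, one_mul]
    exact Nat.add_le_add_right (Nat.mul_le_mul_right _ h1) _
  have h6 : 1 ≤ 2^d := Nat.one_le_two_pow
  rw [QQ, pow_succ, pow_succ]
  omega

theorem le_QQ (k d s : ℕ) : (k+d)*2^d ≤ QQ k d s := by
  rw [QQ]
  generalize 2^(k+1) = a, 2^(d+1) = b
  omega

theorem TT_le (k d s : ℕ) (hd : d = k + s) (hs : 0 < s) :
    TT k d ≤ 5*((k+d)*2^d) := by
  have h3 : 2^k ≤ 2^d := Nat.pow_le_pow_right (by norm_num) (by omega)
  have h4 : 1 * 2^d ≤ (k+d)*2^d := Nat.mul_le_mul_right _ (by omega)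
  rw [TT, pow_succ, pow_succ]
  omega

theorem CC_le (k d s : ℕ) (hd : d = k + s) (hs : 0 < s) (hn : k + d ≤ 2^k) :
    CC k d s ≤ (k+d)*2^d*(2^k/s) + 12*((k+d)*2^d) := by
  have h1 : 2^k/s*s ≤ 2^k := Nat.div_mul_le_self _ _
  have h2 : 2^k*2^s = 2^d := by rw [hd, pow_add]
  have h3 : 2^k ≤ 2^d := Nat.pow_le_pow_right (by norm_num) (by omega)
  have h4 : 2^s ≤ 2^d := Nat.pow_le_pow_right (by norm_num) (by omega)
  have h5 : (2^k/s+1)*(2^s*s) ≤ 2^d + (k+d)*2^d := by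
    calc (2^k/s+1)*(2^s*s) = (2^k/s*s)*2^s + s*2^s := by ring
      _ ≤ 2^k*2^s + (k+d)*2^d := by
        apply add_le_add (Nat.mul_le_mul_right _ h1) (Nat.mul_le_mul (by omega) h4)
      _ = _ := by rw [h2]
  have h6 : 1 ≤ 2^d := Nat.one_le_two_pow
  have h7 : 1 * 2^d ≤ (k+d)*2^d := Nat.mul_le_mul_right _ (by omega)
  rw [CC, pow_succ, pow_succ, mul_add ((k+d)*2^d), mul_one]
  omega

theorem W_bound (WC WT : ℝ) (hWC : 0 < WC) (hWT : 0 < WT) (k d s n : ℕ) (hn' : n = k + d)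
    (hd : d = k + s) (hs : 0 < s) (hn : k + d ≤ 2^k) (P : ℝ) (hP : 0 < P)
    (hnP : (n : ℝ) * P ≤ 2^k) (D : ℝ) (hD : WC * 2^n ≤ D) :
    (WC * CC k d s + WT * TT k d) / D ≤ n / s + (12 + 5 * (WT / WC)) / P := by
  have hD0 : 0 < D := lt_of_lt_of_le (by positivity) hD
  have hc : (CC k d s : ℝ) ≤ n * 2^d * (2^k/s) + 12 * (n * 2^d) := by
    have h := CC_le k d s hd hs hn
    have h' : (CC k d s : ℝ) ≤ ((k+d)*2^d*(2^k/s) + 12*((k+d)*2^d) : ℕ) := by exact_mod_cast h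
    refine h'.trans ?_
    have e : (((2^k/s : ℕ)) : ℝ) ≤ 2^k/s := by
      have := @Nat.cast_div_le ℝ _ _ _ (2^k) s
      simpa using this
    subst hn'
    push_cast at e ⊢
    gcongr
  have ht : (TT k d : ℝ) ≤ 5 * (n * 2^d) := by
    subst hn'
    exact_mod_cast TT_le k d s hd hs
  have hs' : (0:ℝ) < s := by exact_mod_cast hs
  have hpow : (2:ℝ)^n = 2^k * 2^d := by rw [hn', pow_add]
  have hx : (n:ℝ) * 2^d ≤ 2^n / P := by
    rw [le_div_iff₀ hP, hpow]
    have : (0:ℝ) < 2^d := by positivity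
    nlinarith
  rw [div_le_iff₀ hD0]
  have hnn : (0:ℝ) ≤ n / s + (12 + 5 * (WT / WC)) / P := by positivity
  calc WC * CC k d s + WT * TT k d
      ≤ WC * (n * 2^d * (2^k/s) + 12 * (n * 2^d)) + WT * (5 * (n * 2^d)) := by gcongr
    _ = WC * (n/s * 2^n) + (12 * WC + 5 * WT) * (n * 2^d) := by rw [hpow]; ring
    _ ≤ WC * (n/s * 2^n) + (12 * WC + 5 * WT) * (2^n / P) := by gcongr
    _ = (n / s + (12 + 5 * (WT / WC)) / P) * (WC * 2^n) := by field_simp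
    _ ≤ _ := by gcongr

end Rev

namespace Rev

/-- For any growing functions `ψ` and `φ` with `φ(n) ≤ n / (log₂ n + log₂ ψ(n))` for
all sufficiently large `n`, there is a sequence `q₀(n) ~ n · 2^{n - ⌈n/φ(n)⌉}` with
`W(n, q₀(n)) ≲ W^C · 2ⁿ + W^T · n · 2^{n - ⌈n/φ(n)⌉}`. -/
theorem quantum_weight_upper_with_memory (WC WT : ℝ) (hWC : 0 < WC) (hWT : 0 < WT)
    (ψ φ : ℕ → ℝ) (hψ : Growing ψ) (hφ : Growing φ)
    (hφψ : ∀ᶠ n in atTop, φ n ≤ (n : ℝ) / (Real.logb 2 n + Real.logb 2 (ψ n))) :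
    ∃ q₀ : ℕ → ℕ,
      AsympEquiv (fun n => (q₀ n : ℝ)) (fun n => (n : ℝ) * pow2e φ n) ∧
      AsympLE (fun n => Wsh WC WT n (q₀ n))
        (fun n => WC * (2 : ℝ) ^ n + WT * ((n : ℝ) * pow2e φ n)) := by
  classical
  let k : ℕ → ℕ := fun n => ⌈(n : ℝ) / φ n⌉.toNat
  let d : ℕ → ℕ := fun n => n - k n
  let s : ℕ → ℕ := fun n => n - 2 * k n
  have hφ6 := hφ.2.eventually_ge_atTop 6
  have hψ1 := hψ.2.eventually_ge_atTop 1
  have key : ∀ᶠ n : ℕ in atTop, n = k n + d n ∧ d n = k n + s n ∧ 0 < s n ∧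
      (n : ℝ) * ψ n ≤ 2^(k n) ∧ pow2e φ n = 2^(d n) ∧
      (n : ℝ) * (1 - 2 / φ n - 2 / n) ≤ s n ∧ 0 < 1 - 2 / φ n - 2 / (n:ℝ) ∧ 8 ≤ n ∧
      1 ≤ ψ n := by
    filter_upwards [hφ6, hψ1, hφψ, eventually_ge_atTop 8] with n h6 h1 hle h8
    have h8' : (8:ℝ) ≤ n := by exact_mod_cast h8
    have hnn : (0:ℝ) ≤ n / φ n := by positivity
    have hkz : ((k n : ℕ) : ℤ) = ⌈(n : ℝ) / φ n⌉ := Int.toNat_of_nonneg (Int.ceil_nonneg hnn)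
    have hkr : ((k n : ℕ) : ℝ) = (⌈(n : ℝ) / φ n⌉ : ℝ) := by exact_mod_cast hkz
    have hk1 : (k n : ℝ) ≤ n / φ n + 1 := by rw [hkr]; exact (Int.ceil_lt_add_one _).le
    have hk2 : (n : ℝ) / φ n ≤ k n := by rw [hkr]; exact Int.le_ceil _
    have hk3 : (n : ℝ) / φ n ≤ n / 6 := by gcongr
    have hk4 : 3 * k n + 1 ≤ n := by
      have : (3 * (k n : ℝ) + 1) ≤ n := by linarith
      exact_mod_cast this
    have hs : (s n : ℝ) = n - 2 * k n := by
      have : 2 * k n ≤ n := by omega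
      simp only [s]
      push_cast [Nat.cast_sub this]; ring
    refine ⟨by simp only [d]; omega, by simp only [d, s]; omega, by simp only [s]; omega,
      ?_, ?_, ?_, ?_, h8, h1⟩
    · have hl : 0 < Real.logb 2 n := Real.logb_pos (by norm_num) (by linarith)
      have hl2 : 0 ≤ Real.logb 2 (ψ n) := Real.logb_nonneg (by norm_num) h1
      have hl3 : Real.logb 2 n + Real.logb 2 (ψ n) ≤ k n := by
        refine le_trans ?_ hk2
        rw [le_div_iff₀ (by linarith)]
        rw [le_div_iff₀ (by linarith)] at hle
        linarith
      rw [← Real.logb_mul (by linarith) (by linarith),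
        Real.logb_le_iff_le_rpow (by norm_num) (by nlinarith), Real.rpow_natCast] at hl3
      exact hl3
    · rw [pow2e, ← hkz, ← zpow_natCast]
      congr 1
      simp only [d]; omega
    · rw [hs]
      have : (n : ℝ) * (1 - 2 / φ n - 2 / n) = n - 2 * (n / φ n) - 2 := by
        field_simp
      linarith
    · have a1 : 2 / φ n ≤ 2 / 6 := by gcongr
      have a2 : 2 / (n:ℝ) ≤ 2 / 8 := by gcongr
      linarith
  have hsmall : ∀ᶠ n : ℕ in atTop, k n + d n ≤ 2^(k n) := by
    filter_upwards [key] with n ⟨h1, _, _, h4, _, _, _, _, h9⟩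
    have : (n : ℝ) ≤ 2^(k n) := by nlinarith [(Nat.cast_nonneg n : (0:ℝ) ≤ n)]
    rw [← h1]; exact_mod_cast this
  refine ⟨fun n => QQ (k n) (d n) (s n), ?_, ?_⟩
  · have hlim : Tendsto (fun n : ℕ => 1 + 10 / (n:ℝ)) atTop (nhds 1) := by
      simpa using (tendsto_const_nhds (x := (1:ℝ))).add (tendsto_const_div_atTop_nhds_zero_nat 10)
    refine tendsto_of_tendsto_of_tendsto_of_le_of_le' tendsto_const_nhds hlim ?_ ?_
    · filter_upwards [key] with n ⟨h1, _, _, _, h5, _, _, h8, _⟩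
      have hn : (0:ℝ) < n := by exact_mod_cast (by omega : 0 < n)
      have := le_QQ (k n) (d n) (s n)
      rw [← h1] at this
      rw [h5, le_div_iff₀ (by positivity), one_mul]
      exact_mod_cast this
    · filter_upwards [key, hsmall] with n ⟨h1, h2, _, _, h5, _, _, h8, _⟩ hsm
      have hn : (0:ℝ) < n := by exact_mod_cast (by omega : 0 < n)
      have := QQ_le (k n) (d n) (s n) h2 hsm
      rw [← h1] at this
      rw [h5, div_le_iff₀ (by positivity)]
      have e : (1 + 10 / (n:ℝ)) * (n * 2 ^ d n) = n * 2^(d n) + 10 * 2^(d n) := by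
        field_simp
      rw [e]
      exact_mod_cast this
  · have hu : Tendsto (fun n : ℕ => 1 / (1 - 2 / φ n - 2 / (n:ℝ)) +
        (12 + 5 * (WT / WC)) / ψ n) atTop (nhds 1) := by
      have a1 : Tendsto (fun n => 2 / φ n) atTop (nhds 0) := hφ.2.const_div_atTop 2
      have a2 : Tendsto (fun n : ℕ => 2 / (n:ℝ)) atTop (nhds 0) :=
        tendsto_const_div_atTop_nhds_zero_nat 2
      have a3 : Tendsto (fun n => (12 + 5 * (WT / WC)) / ψ n) atTop (nhds 0) :=
        hψ.2.const_div_atTop _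
      have a4 := (((tendsto_const_nhds (x := (1:ℝ))).sub a1).sub a2)
      have a5 := ((tendsto_const_nhds (x := (1:ℝ))).div a4 (by norm_num)).add a3
      simpa using a5
    unfold AsympLE
    rw [← hu.limsup_eq]
    apply Filter.limsup_le_limsup
    · filter_upwards [key, hsmall] with n ⟨h1, h2, h3, h4, h5, h6, h7, h8, h9⟩ hsm
      have hn : (0:ℝ) < n := by exact_mod_cast (by omega : 0 < n)
      have hs : (0:ℝ) < s n := by exact_mod_cast h3
      have hD : WC * 2^n ≤ WC * (2 : ℝ) ^ n + WT * ((n : ℝ) * pow2e φ n) := by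
        rw [h5]; have : 0 ≤ WT * ((n:ℝ) * 2^(d n)) := by positivity
        linarith
      have hD0 : 0 < WC * (2 : ℝ) ^ n + WT * ((n : ℝ) * pow2e φ n) :=
        lt_of_lt_of_le (by positivity) hD
      refine (div_le_div_of_nonneg_right
        (Wsh_le WC WT hWC hWT (k n) (d n) (s n) n _ h1 h3 rfl) hD0.le).trans ?_
      refine (W_bound WC WT hWC hWT (k n) (d n) (s n) n h1 h2 h3 hsm (ψ n) (by linarith) h4 _
        hD).trans ?_
      refine add_le_add_left ?_ _
      rw [div_le_div_iff₀ hs h7]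
      linarith
    · refine Filter.IsBoundedUnder.isCoboundedUnder_le ⟨0, ?_⟩
      rw [eventually_map]
      refine Eventually.of_forall fun n => ?_
      have : 0 ≤ pow2e φ n := by unfold pow2e; positivity
      exact div_nonneg (Wsh_nonneg WC WT hWC hWT _ _) (by positivity)
    · exact hu.isBoundedUnder_le

end Rev
end

section
/- For each n, let c_n : 𝔹^n → 𝔹^{2^n} be the transformation sending x to the tuple of all conjunctions x₁^{a₁} ∧ ⋯ ∧ x_n^{a_n} over a ∈ 𝔹^n, where x^1 = x and x^0 = ¬x. There exists a family of reversible circuits (S_n) over NOT, CNOT and C²NOT gates and a sequence q(n) such that S_n implements c_n with q(n) additional inputs and, as n → ∞, D(S_n) ~ n, L(S_n) ~ 3·2^n and q(n) ~ 3·2^n. -/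
open Filter

namespace Rev

/-- `c_n : 𝔹ⁿ → 𝔹^{2ⁿ}`: the tuple of all conjunctions `x₁^{a₁} ∧ ⋯ ∧ x_n^{a_n}`,
the index `j : Fin (2 ^ n)` encoding `a ∈ 𝔹ⁿ` via its binary digits. -/
def conjAll (n : ℕ) : (Fin n → Bool) → Fin (2 ^ n) → Bool :=
  fun x j => decide (∀ i : Fin n, x i = (j : ℕ).testBit i.val)


section aux
variable {X : Type*}

inductive Layer : ℕ → Multiset (X → Bool) → Multiset (X → Bool) → Prop
  | nil (s) : Layer 0 s s
  | not (f) {g s s'} : Layer g s s' → Layer (g+1) (f ::ₘ s) (fᶜ ::ₘ s')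
  | cnot (f) {g s s'} : Layer g s s' → Layer (g+1) (f ::ₘ ⊥ ::ₘ s) (f ::ₘ f ::ₘ s')
  | tof (f h) {g s s'} : Layer g s s' →
      Layer (g+1) (f ::ₘ h ::ₘ ⊥ ::ₘ s) (f ::ₘ h ::ₘ (f ⊓ h) ::ₘ s')

inductive Can : ℕ → ℕ → Multiset (X → Bool) → Multiset (X → Bool) → Prop
  | nil (s) : Can 0 0 s s
  | cons {d g g' s s' s''} : Layer g s s' → Can d g' s' s'' → Can (d+1) (g+g') s s''

theorem Layer.frame {g} {s s' : Multiset (X → Bool)} (h : Layer g s s') (t) :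
    Layer g (t + s) (t + s') := by
  induction h with
  | nil s => exact .nil _
  | not f h ih => simpa using ih.not f
  | cnot f h ih => simpa using ih.cnot f
  | tof f k h ih => simpa using ih.tof f k

theorem Layer.par {g g'} {s s' t t' : Multiset (X → Bool)} (h : Layer g s s')
    (h' : Layer g' t t') : Layer (g + g') (s + t) (s' + t') := by
  induction h with
  | nil s => simpa using h'.frame s
  | not f h ih => simpa [add_right_comm] using ih.not f
  | cnot f h ih => simpa [add_right_comm] using ih.cnot f
  | tof f k h ih => simpa [add_right_comm] using ih.tof f k

theorem Can.seq {d d' g g'} {s s' s'' : Multiset (X → Bool)} (h : Can d g s s')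
    (h' : Can d' g' s' s'') : Can (d + d') (g + g') s s'' := by
  induction h with
  | nil s => simpa using h'
  | cons l h ih =>
    have := Can.cons l (ih h')
    rwa [← add_assoc, add_right_comm] at this

theorem Can.ofLayer {g} {s s' : Multiset (X → Bool)} (h : Layer g s s') : Can 1 g s s' := by
  simpa using Can.cons h (.nil _)

theorem Can.idle (d) (s : Multiset (X → Bool)) : Can d 0 s s := by
  induction d with
  | zero => exact .nil s
  | succ d ih => simpa using Can.cons (.nil s) ih

theorem Can.mono {d d' g} {s s' : Multiset (X → Bool)} (h : Can d g s s') (hd : d ≤ d') :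
    Can d' g s s' := by
  have := h.seq (Can.idle (d' - d) s')
  rwa [Nat.add_sub_cancel' hd, add_zero] at this

theorem Can.par {d g g'} {s s' t t' : Multiset (X → Bool)} (h : Can d g s s')
    (h' : Can d g' t t') : Can d (g + g') (s + t) (s' + t') := by
  induction h generalizing g' t with
  | nil s => cases h'; exact .nil _
  | cons l h ih =>
    cases h' with
    | cons l' h' =>
      have := Can.cons (l.par l') (ih h')
      rwa [add_add_add_comm] at this

theorem Can.frame {d g} {s s' : Multiset (X → Bool)} (h : Can d g s s') (t) :
    Can d g (s + t) (s' + t) := by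
  simpa using h.par (Can.idle d t)

theorem layer_double (s : Multiset (X → Bool)) :
    Layer s.card (s + Multiset.replicate s.card ⊥) (s + s) := by
  induction s using Multiset.induction with
  | empty => simpa using Layer.nil 0
  | cons a s ih => 
    have := ih.cnot a
    convert this using 1
    · simp
    · simp only [Multiset.card_cons, Multiset.replicate_succ, Multiset.cons_add,
        Multiset.add_cons]
      rw [Multiset.cons_swap]
    · simp

theorem can_copy (k : ℕ) (s : Multiset (X → Bool)) :
    Can k (s.card * (2^k - 1)) (s + Multiset.replicate (s.card * (2^k - 1)) ⊥) (2^k • s) := by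
  induction k with
  | zero => simpa using Can.nil s
  | succ k ih =>
    have h1 := ih.frame (Multiset.replicate (2^k * s.card) ⊥)
    have h2 := layer_double (2^k • s)
    rw [Multiset.card_nsmul] at h2
    have h3 := h1.seq (Can.ofLayer h2)
    have e : s.card * (2^k - 1) + 2^k * s.card = s.card * (2^(k+1) - 1) := by
      rw [mul_comm (2^k), ← mul_add]; congr 1
      have := Nat.one_le_two_pow (n := k); rw [pow_succ]; omega
    rw [add_assoc, ← Multiset.replicate_add, e, ← add_nsmul, ← two_mul, ← pow_succ'] at h3
    exact h3

theorem layer_prod (p : Multiset ((X → Bool) × (X → Bool))) :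
    Layer p.card (p.map Prod.fst + p.map Prod.snd + Multiset.replicate p.card ⊥)
      (p.map Prod.fst + p.map Prod.snd + p.map (fun a => a.1 ⊓ a.2)) := by
  induction p using Multiset.induction with
  | empty => simpa using Layer.nil 0
  | cons a s ih => 
    have := ih.tof a.1 a.2
    convert this using 1
    · simp
    · simp only [Multiset.map_cons, Multiset.card_cons, Multiset.replicate_succ]
      simp only [← Multiset.singleton_add]
      abel
    · simp only [Multiset.map_cons]
      simp only [← Multiset.singleton_add]
      abel

theorem map_fst_prod {α β} (s : Multiset α) (t : Multiset β) :
    (s ×ˢ t).map Prod.fst = t.card • s := by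
  induction s using Multiset.induction with
  | empty => simp
  | cons a s ih => simp [ih, Multiset.nsmul_cons, Multiset.nsmul_singleton]

theorem map_snd_prod {α β} (s : Multiset α) (t : Multiset β) :
    (s ×ˢ t).map Prod.snd = s.card • t := by
  induction s using Multiset.induction with
  | empty => simp
  | cons a s ih => simp [ih, add_nsmul, add_comm]

/-- minterms -/
def MT : List (X → Bool) → Multiset (X → Bool)
  | [] => {⊤}
  | f :: l => (MT l).map (fun m => f ⊓ m) + (MT l).map (fun m => fᶜ ⊓ m)

theorem card_MT (l : List (X → Bool)) : (MT l).card = 2 ^ l.length := by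
  induction l with
  | nil => simp [MT]
  | cons f l ih => simp [MT, ih, pow_succ]; ring

theorem MT_append (l l' : List (X → Bool)) :
    MT (l ++ l') = (MT l ×ˢ MT l').map (fun a => a.1 ⊓ a.2) := by
  induction l with
  | nil => simp [MT, ← Multiset.cons_zero]
  | cons f l ih =>
    have key : ∀ (f : X → Bool) (s t : Multiset (X → Bool)),
        ((s.map (fun m => f ⊓ m)) ×ˢ t).map (fun a => a.1 ⊓ a.2)
        = ((s ×ˢ t).map (fun a => a.1 ⊓ a.2)).map (fun m => f ⊓ m) := by
      intro f s t
      induction s using Multiset.induction with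
      | empty => simp
      | cons a s ih => simp [ih, inf_assoc]
    simp [MT, ih, Multiset.add_product, key]

theorem mem_MT (l : List (X → Bool)) (a : ℕ → Bool) :
    (fun x => decide (∀ i (h : i < l.length), l[i] x = a i)) ∈ MT l := by
  induction l generalizing a with
  | nil => simp [MT]; rfl
  | cons f l ih =>
    have h := ih (fun i => a (i+1))
    have e : ∀ x, (∀ i (h : i < (f :: l).length), (f :: l)[i] x = a i) ↔
      (f x = a 0 ∧ ∀ i (h : i < l.length), l[i] x = a (i+1)) := by
      intro x
      constructor
      · intro h
        exact ⟨h 0 (by simp), fun i hi => h (i+1) (by simpa using hi)⟩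
      · rintro ⟨h0, h1⟩ i hi
        cases i with
        | zero => exact h0
        | succ i => exact h1 i (by simpa using hi)
    simp only [MT, Multiset.mem_add, Multiset.mem_map]
    cases h0 : a 0 with
    | true =>
      left; refine ⟨_, h, ?_⟩
      funext x; simp only [e, h0]; cases hf : f x <;> simp [hf]
    | false =>
      right; refine ⟨_, h, ?_⟩
      funext x; simp only [e, h0]; cases hf : f x <;> simp [hf]

def dep (n : ℕ) : ℕ := n + 2 * Nat.clog 2 n + 2

theorem dep_mono {a b : ℕ} (h : a ≤ b) : dep a ≤ dep b := by
  have := Nat.clog_mono_right 2 h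
  unfold dep; omega

theorem main_rec (n : ℕ) : ∀ l : List (X → Bool), l.length = n → 1 ≤ n →
    ∃ g z j, Can (dep n) g ((l : Multiset (X → Bool)) + Multiset.replicate z ⊥) (MT l + j) ∧
      z ≤ g ∧ g ≤ 2 * n * 2^n ∧ g ≤ 3 * 2^n + 4 * n * 2^((n+1)/2) ∧
      3 * 2^n ≤ g + 2 * 2^((n+1)/2) := by
  induction n using Nat.strong_induction_on with
  | _ n ih =>
  intro l hl hn
  rcases Nat.lt_or_ge n 2 with h2 | h2
  · obtain rfl : n = 1 := by omega
    obtain ⟨f, rfl⟩ := List.length_eq_one_iff.1 hl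
    refine ⟨2, 1, 0, ?_, by norm_num, by norm_num, by norm_num, by norm_num⟩
    have h1 : Layer 1 (f ::ₘ ⊥ ::ₘ 0) (f ::ₘ f ::ₘ 0) := Layer.cnot f (.nil 0)
    have h3 : Layer 1 (f ::ₘ f ::ₘ 0) (fᶜ ::ₘ f ::ₘ 0) := Layer.not f (.nil (f ::ₘ 0))
    have := (Can.ofLayer h1).seq (Can.ofLayer h3)
    have h4 := this.mono (d' := dep 1) (by simp [dep])
    convert h4 using 1
    · rfl
    · have : MT [f] = {f} + {fᶜ} := by simp [MT]
      rw [this, add_zero, add_comm]; rfl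
  · obtain ⟨a, b, ha1, hab, rfl, hb⟩ : ∃ a b, 1 ≤ a ∧ a ≤ b ∧ n = a + b ∧ b = (n+1)/2 :=
      ⟨n/2, (n+1)/2, by omega, by omega, by omega, rfl⟩
    obtain ⟨l1, l2, rfl, hl1, hl2⟩ : ∃ l1 l2, l = l1 ++ l2 ∧ l1.length = a ∧ l2.length = b :=
      ⟨l.take a, l.drop a, by simp, by simp [hl], by simp [hl]⟩
    obtain ⟨g1, z1, j1, c1, hz1, hg1, -, -⟩ := ih a (by omega) l1 hl1 ha1
    obtain ⟨g2, z2, j2, c2, hz2, hg2, -, -⟩ := ih b (by omega) l2 hl2 (by omega)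
    have p1 := (c1.mono (dep_mono hab)).par c2
    have k1 := can_copy b (MT l1)
    have k2 := (can_copy a (MT l2)).mono hab
    have p2 := k1.par k2
    have m := layer_prod (MT l1 ×ˢ MT l2)
    rw [← MT_append, map_fst_prod, map_snd_prod] at m
    simp only [Multiset.card_product, card_MT, hl1, hl2] at p2 m
    have hA : 2 ^ a * (2^b - 1) + 2^a = 2^(a+b) := by
      rw [← Nat.mul_succ, Nat.succ_eq_add_one, Nat.sub_add_cancel Nat.one_le_two_pow, pow_add]
    have hB : 2 ^ b * (2^a - 1) + 2^b = 2^(a+b) := by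
      rw [← Nat.mul_succ, Nat.succ_eq_add_one, Nat.sub_add_cancel Nat.one_le_two_pow, pow_add,
        mul_comm]
    rw [← pow_add] at m
    generalize 2 ^ a * (2^b - 1) = u at *
    generalize 2 ^ b * (2^a - 1) = v at *
    have q1 := p1.frame (Multiset.replicate u ⊥ + Multiset.replicate v ⊥ +
      Multiset.replicate (2^(a+b)) ⊥)
    have q2 := p2.frame (j1 + j2 + Multiset.replicate (2^(a+b)) ⊥)
    have q3 := (Can.ofLayer m).frame (j1 + j2)
    have q2' := q2.seq (by
      convert q3 using 1
      abel)
    have q := q1.seq (by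
      convert q2' using 1
      abel)
    have hd : dep b + (b + 1) ≤ dep (a + b) := by
      have : Nat.clog 2 (a+b) = Nat.clog 2 b + 1 := by
        rw [Nat.clog_of_two_le (by norm_num) (by omega)]
        congr 2; omega
      unfold dep; omega
    have q := q.mono hd
    have hpa : 2 ^ a ≤ 2 ^ b := Nat.pow_le_pow_right (by norm_num) hab
    have hpa2 : 2 ≤ 2 ^ a := by simpa using Nat.pow_le_pow_right (n := 2) (by norm_num) ha1
    have hpab : 2 ^ (a+b) = 2 ^ a * 2 ^ b := pow_add _ _ _
    rw [← hb]
    refine ⟨g1 + g2 + (u + v + 2^(a+b)), z1 + z2 + u + v + 2^(a+b),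
      2 ^ b • MT l1 + 2 ^ a • MT l2 + (j1 + j2), ?_, by omega, ?_, ?_, by omega⟩
    · convert q using 1
      · omega
      · rw [← Multiset.coe_add]
        simp only [Multiset.replicate_add]
        abel
      · abel
    · have hAB : 2^a + 2^b ≤ 2^a * 2^b := by nlinarith
      have h1 : 2 * a * 2^a ≤ 2 * b * 2^a := by gcongr
      have h3 : 2 * b * (2^a + 2^b) ≤ 2 * b * 2^(a+b) := by rw [hpab]; gcongr
      have h4 : 2 * (1 + b) * 2^(a+b) ≤ 2 * (a + b) * 2^(a+b) := by gcongr
      nlinarith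
    · have h1 : 2 * a * 2^a ≤ 2 * a * 2^b := by gcongr
      nlinarith

end aux

section sound
variable {X : Type*}

theorem extract {N : ℕ} {U : Finset (Fin N)} {v : Fin N → X → Bool} {f s}
    (h : U.val.map v = f ::ₘ s) : ∃ i ∈ U, v i = f ∧ (U.erase i).val.map v = s := by
  have : f ∈ U.val.map v := by rw [h]; simp
  obtain ⟨i, hi, rfl⟩ := Multiset.mem_map.1 this
  refine ⟨i, hi, rfl, ?_⟩
  have h2 : U.val = i ::ₘ (U.erase i).val := by
    rw [Finset.erase_val, Multiset.cons_erase hi]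
  rw [h2, Multiset.map_cons] at h
  exact (Multiset.cons_inj_right _).1 h

theorem val_erase {N : ℕ} {U : Finset (Fin N)} {i} (hi : i ∈ U) :
    U.val = i ::ₘ (U.erase i).val := by
  rw [Finset.erase_val, Multiset.cons_erase hi]

def LS (N : ℕ) (g : ℕ) (U : Finset (Fin N)) (v v' : Fin N → X → Bool) : Prop :=
  ∃ p : Circuit N, p.length = g ∧ DepthOne p ∧ (∀ γ ∈ p, insert γ.t γ.I ⊆ U) ∧
    (∀ i ∉ U, v' i = v i) ∧ ∀ x, Circuit.eval p (fun i => v i x) = fun i => v' i x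

theorem LS.cons {N g : ℕ} {U W : Finset (Fin N)} {v v₁ v' : Fin N → X → Bool} (γ : Gate N)
    (hW : W ⊆ U) (h1 : insert γ.t γ.I ⊆ U) (h2 : Disjoint (insert γ.t γ.I) W)
    (h3 : ∀ x, γ.apply (fun i => v i x) = fun i => v₁ i x)
    (h4 : LS N g W v₁ v') (h5 : ∀ i ∉ U, v₁ i = v i) : LS N (g+1) U v v' := by
  obtain ⟨p, hp, hd, hs, ho, he⟩ := h4
  refine ⟨γ :: p, by simp [hp], ?_, ?_, ?_, ?_⟩
  · refine List.pairwise_cons.2 ⟨fun γ' h => h2.mono_right (hs γ' h), hd⟩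
  · intro γ' h
    rcases List.mem_cons.1 h with rfl | h
    · exact h1
    · exact (hs γ' h).trans hW
  · intro i hi
    rw [ho i (fun h => hi (hW h)), h5 i hi]
  · intro x
    have := he x
    rw [← h3] at this
    exact this

theorem map_update {N : ℕ} {U : Finset (Fin N)} {v : Fin N → X → Bool} {i f} (hi : i ∉ U) :
    U.val.map (Function.update v i f) = U.val.map v := by
  apply Multiset.map_congr rfl
  intro k hk
  rw [Function.update_of_ne]
  rintro rfl; exact hi hk

theorem layer_sound {g} {s s' : Multiset (X → Bool)} (h : Layer g s s') :
    ∀ {N : ℕ} (U : Finset (Fin N)) (v : Fin N → X → Bool), U.val.map v = s →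
    ∃ v', U.val.map v' = s' ∧ LS N g U v v' := by
  induction h with
  | nil s =>
    intro N U v hv
    exact ⟨v, hv, [], rfl, List.Pairwise.nil, by simp, by simp, fun x => rfl⟩
  | not f h ih =>
    intro N U v hv
    obtain ⟨i, hi, rfl, hv'⟩ := extract hv
    have hi1 : i ∉ U.erase i := by simp
    obtain ⟨v', hm, hL⟩ := ih (U.erase i) (Function.update v i (v i)ᶜ)
      (by rw [map_update hi1, hv'])
    have ho := hL.choose_spec.2.2.2.1
    refine ⟨v', ?_, LS.cons ⟨∅, i, by simp, by simp⟩ (Finset.erase_subset _ _) ?_ ?_ ?_ hL ?_⟩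
    · rw [val_erase hi, Multiset.map_cons, hm, ho i hi1]; simp
    · simpa using hi
    · simp
    · intro x; funext k
      by_cases hk : k = i
      · subst hk; simp [Gate.apply]
      · simp [Gate.apply, hk]
    · intro k hk
      rw [Function.update_of_ne]; rintro rfl; exact hk hi
  | cnot f h ih =>
    intro N U v hv
    obtain ⟨i, hi, rfl, hv'⟩ := extract hv
    obtain ⟨k, hk, hvk, hv⟩ := extract hv'
    have hki : k ≠ i := Finset.ne_of_mem_erase hk
    have hkU : k ∈ U := Finset.mem_of_mem_erase hk
    set W := (U.erase i).erase k with hW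
    have hk1 : k ∉ W := by simp [hW]
    have hi1 : i ∉ W := by simp [hW]
    obtain ⟨v', hm, hL⟩ := ih W (Function.update v k (v i))
      (by rw [map_update hk1, hv])
    have ho := hL.choose_spec.2.2.2.1
    refine ⟨v', ?_, LS.cons ⟨{i}, k, by simp, by simpa using hki⟩
      ((Finset.erase_subset _ _).trans (Finset.erase_subset _ _)) ?_ ?_ ?_ hL ?_⟩
    · rw [val_erase hi, val_erase hk, Multiset.map_cons, Multiset.map_cons, hm, ho i hi1,
        ho k hk1]
      simp [hki.symm]
    · intro a; simp; rintro (rfl | rfl) <;> assumption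
    · simp [hk1, hi1]
    · intro x; funext a
      by_cases ha : a = k
      · subst ha; simp [Gate.apply, hvk]
      · simp [Gate.apply, ha]
    · intro a ha
      rw [Function.update_of_ne]; rintro rfl; exact ha hkU
  | tof f f' h ih =>
    intro N U v hv
    obtain ⟨i, hi, rfl, hv'⟩ := extract hv
    obtain ⟨j, hj, rfl, hv''⟩ := extract hv'
    obtain ⟨k, hk, hvk, hv⟩ := extract hv''
    have hkj : k ≠ j := Finset.ne_of_mem_erase hk
    have hk' := Finset.mem_of_mem_erase hk
    have hki : k ≠ i := Finset.ne_of_mem_erase hk'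
    have hji : j ≠ i := Finset.ne_of_mem_erase hj
    have hkU : k ∈ U := Finset.mem_of_mem_erase hk'
    have hjU : j ∈ U := Finset.mem_of_mem_erase hj
    set W := ((U.erase i).erase j).erase k with hW
    have hk1 : k ∉ W := by simp [hW]
    have hi1 : i ∉ W := by simp [hW]
    have hj1 : j ∉ W := by simp [hW]
    obtain ⟨v', hm, hL⟩ := ih W (Function.update v k (v i ⊓ v j))
      (by rw [map_update hk1, hv])
    have ho := hL.choose_spec.2.2.2.1
    refine ⟨v', ?_, LS.cons ⟨{i, j}, k, Finset.card_le_two, by simp [hki, hkj]⟩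
      ((Finset.erase_subset _ _).trans
        ((Finset.erase_subset _ _).trans (Finset.erase_subset _ _))) ?_ ?_ ?_ hL ?_⟩
    · rw [val_erase hi, val_erase hj, val_erase hk, Multiset.map_cons, Multiset.map_cons,
        Multiset.map_cons, hm, ho i hi1, ho k hk1, ho j hj1]
      simp [hki.symm, hkj.symm]
    · intro a; simp; rintro (rfl | rfl | rfl) <;> assumption
    · simp [hk1, hi1, hj1]
    · intro x; funext a
      by_cases ha : a = k
      · subst ha; cases h1 : v i x <;> cases h2 : v j x <;> simp [Gate.apply, hvk, h1, h2]
      · simp [Gate.apply, ha]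
    · intro a ha
      rw [Function.update_of_ne]; rintro rfl; exact ha hkU

def notG {N : ℕ} (i : Fin N) : Gate N := ⟨∅, i, by simp, by simp⟩

theorem eval_append {N : ℕ} (p r : Circuit N) (x) :
    Circuit.eval (p ++ r) x = Circuit.eval r (Circuit.eval p x) := by
  simp [Circuit.eval]

theorem can_sound {d g} {s s' : Multiset (X → Bool)} (h : Can d g s s') :
    ∀ {N : ℕ} (U : Finset (Fin N)) (i₀ : Fin N) (_ : i₀ ∉ U) (v : Fin N → X → Bool),
    U.val.map v = s →
    ∃ v', U.val.map v' = s' ∧ ∃ P : List (Circuit N), P.length = d ∧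
      P.flatten.length = g + d ∧ (∀ p ∈ P, DepthOne p) ∧
      (P.flatten.countP (fun γ => γ.t = i₀) = d) ∧
      ∀ x, Circuit.eval P.flatten (fun i => v i x) = fun i => v' i x := by
  induction h with
  | nil s =>
    intro N U i₀ hi v hv
    exact ⟨v, hv, [], by simp [Circuit.eval]⟩
  | cons l h ih =>
    intro N U i₀ hi v hv
    obtain ⟨v₁, hm, p, hp, hd, hs, ho, he⟩ := layer_sound l U v hv
    obtain ⟨v', hm', P, hP, hPl, hPd, hPc, hPe⟩ := ih U i₀ hi (Function.update v₁ i₀ (v₁ i₀)ᶜ)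
      (by rw [map_update hi, hm])
    refine ⟨v', hm', (p ++ [notG i₀]) :: P, by simp [hP], ?_, ?_, ?_, ?_⟩
    · simp [hPl] at *; omega
    · intro r hr
      rcases List.mem_cons.1 hr with rfl | hr
      · refine List.pairwise_append.2 ⟨hd, by simp, ?_⟩
        intro a ha b hb
        simp only [List.mem_singleton] at hb; subst hb
        refine Finset.disjoint_of_subset_left (hs a ha) ?_
        simpa [notG] using hi
      · exact hPd r hr
    · rw [List.flatten_cons, List.countP_append, hPc, List.countP_append]
      have : List.countP (fun γ : Gate N => decide (γ.t = i₀)) p = 0 := by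
        rw [List.countP_eq_zero]
        intro a ha h
        have := hs a ha (Finset.mem_insert_self _ _)
        simp at h; rw [h] at this; exact hi this
      rw [this]; simp [notG]; omega
    · intro x
      rw [List.flatten_cons, eval_append, eval_append, he, ← hPe]
      congr 1
      funext a
      by_cases ha : a = i₀
      · subst ha; simp [Circuit.eval, Gate.apply, notG]
      · simp [Circuit.eval, Gate.apply, notG, ha]

theorem depth_eq {N : ℕ} (P : List (Circuit N)) (i₀ : Fin N) (hd : ∀ p ∈ P, DepthOne p)
    (hc : P.flatten.countP (fun γ => γ.t = i₀) = P.length) :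
    Circuit.D P.flatten = P.length := by
  apply le_antisymm
  · exact Nat.sInf_le ⟨P, rfl, rfl, hd⟩
  · refine le_csInf ⟨_, P, rfl, rfl, hd⟩ ?_
    rintro d ⟨Q, rfl, hQ, hQd⟩
    rw [← hc, ← hQ]
    clear hQ hc hd
    induction Q with
    | nil => simp
    | cons p Q ih =>
      rw [List.flatten_cons, List.countP_append, List.length_cons, add_comm]
      refine add_le_add (ih fun p hp => hQd p (List.mem_cons_of_mem _ hp)) ?_
      have h1 := hQd p List.mem_cons_self
      clear hQd ih
      have h2 : ∀ p : Circuit N, DepthOne p → p.countP (fun γ => γ.t = i₀) ≤ 1 := by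
        intro p hp
        rw [List.countP_eq_length_filter]
        have h3 : (p.filter (fun γ => γ.t = i₀)).Pairwise
          fun g₁ g₂ => Disjoint (insert g₁.t g₁.I) (insert g₂.t g₂.I) :=
          List.Pairwise.filter _ hp
        have h4 : ∀ γ ∈ p.filter (fun γ => γ.t = i₀), γ.t = i₀ := by simp
        generalize p.filter (fun γ => γ.t = i₀) = r at *
        match r with
        | [] => simp
        | [a] => simp
        | a :: b :: r =>
          exfalso
          have h5 := (List.pairwise_cons.1 h3).1 b (by simp)
          have ha := h4 a (by simp)
          have hb := h4 b (by simp)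
          rw [ha, hb] at h5
          exact Finset.disjoint_left.1 h5 (Finset.mem_insert_self _ _) (Finset.mem_insert_self _ _)
      exact h2 p h1

end sound

def qq (n : ℕ) : ℕ := 3 * 2^n + 4 * n * 2^((n+1)/2) + 1

theorem exists_circ (n : ℕ) : ∃ S : Circuit (n + qq n), Implements S (conjAll n) ∧
    S.D = dep n ∧ 3 * 2^n ≤ S.L + 2 * 2^((n+1)/2) ∧
    S.L ≤ 3 * 2^n + 4 * n * 2^((n+1)/2) + dep n := by
  set l : List ((Fin n → Bool) → Bool) := List.ofFn (fun i x => x i) with hl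
  have hlen : l.length = n := by simp [hl]
  have hget : ∀ i (h : i < l.length) x, l[i] x = x ⟨i, hlen ▸ h⟩ := by
    intro i h x; rw [List.getElem_of_eq hl, List.getElem_ofFn]
  obtain ⟨g, j, hC, hg1, hg2⟩ : ∃ g j, Can (dep n) g
      ((l : Multiset _) + Multiset.replicate (3 * 2^n + 4 * n * 2^((n+1)/2)) ⊥) (MT l + j) ∧
      g ≤ 3 * 2^n + 4 * n * 2^((n+1)/2) ∧ 3 * 2^n ≤ g + 2 * 2^((n+1)/2) := by
    rcases Nat.eq_zero_or_pos n with h0 | hn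
    · have hl0 : l = [] := List.eq_nil_of_length_eq_zero (by omega)
      rw [hl0]
      have h1 : Layer 1 (⊥ ::ₘ Multiset.replicate 2 ⊥)
        ((⊥ : (Fin n → Bool) → Bool)ᶜ ::ₘ Multiset.replicate 2 ⊥) := Layer.not _ (.nil _)
      refine ⟨1, Multiset.replicate 2 ⊥, ?_, by subst h0; norm_num, by subst h0; norm_num⟩
      have := (Can.ofLayer h1).mono (d' := dep n) (by unfold dep; omega)
      convert this using 1
      · subst h0; simp [Multiset.replicate_succ]
      · have : MT ([] : List ((Fin n → Bool) → Bool)) = {⊤} := rfl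
        rw [this, compl_bot, Multiset.singleton_add]
    · obtain ⟨g, z, j, hC, hz, -, h1, h2⟩ := main_rec n l hlen hn
      obtain ⟨r, hr⟩ := Nat.exists_eq_add_of_le (hz.trans h1)
      refine ⟨g, j + Multiset.replicate r ⊥, ?_, h1, h2⟩
      have := hC.frame (Multiset.replicate r ⊥)
      rw [add_assoc, ← Multiset.replicate_add, ← hr, add_assoc] at this
      exact this
  set v : Fin (n + qq n) → (Fin n → Bool) → Bool := fun i x => pad x i with hv
  have hu : (Finset.univ : Finset (Fin (n + qq n))).val.map v =
      ⊥ ::ₘ ((l : Multiset _) + Multiset.replicate (3 * 2^n + 4 * n * 2^((n+1)/2)) ⊥) := by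
    have e1 : (Finset.univ : Finset (Fin (n + qq n))).val.map v = (List.ofFn v : Multiset _) := by
      simp [List.ofFn_eq_map, Fin.univ_def]
    have e2 : List.ofFn v = l ++ List.replicate (qq n) ⊥ := by
      apply List.ext_getElem
      · simp [hlen]
      · intro i h1 h2
        rw [List.getElem_append]
        simp only [List.length_ofFn] at h1
        split_ifs with h
        · rw [hlen] at h
          funext x
          simp [hv, pad, h, hget]
        · rw [hlen] at h
          funext x
          simp [hv, pad, h]
    rw [e1, e2, ← Multiset.coe_add, Multiset.coe_replicate, qq, Multiset.replicate_succ]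
    simp
  obtain ⟨i₀, -, -, hU⟩ := extract hu
  obtain ⟨v', hm, P, hP, hPl, hPd, hPc, hPe⟩ := can_sound hC (Finset.univ.erase i₀) i₀
    (by simp) v hU
  refine ⟨P.flatten, ⟨?_, ?_⟩, ?_, ?_, ?_⟩
  · unfold qq; omega
  · have hex : ∀ k : Fin (2^n), ∃ i, v' i = fun x => conjAll n x k := by
      intro k
      have h1 := mem_MT l (fun i => (k : ℕ).testBit i)
      have h2 : (fun x => decide (∀ i (h : i < l.length), l[i] x = (k : ℕ).testBit i)) =
          fun x => conjAll n x k := by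
        funext x
        unfold conjAll
        congr 1
        apply propext
        constructor
        · intro h i
          have := h i (by rw [hlen]; exact i.2)
          simpa [hget] using this
        · intro h i hi
          rw [hlen] at hi
          have := h ⟨i, hi⟩
          simpa [hget] using this
      rw [h2] at h1
      have h3 : (fun x => conjAll n x k) ∈ (Finset.univ.erase i₀).val.map v' := by
        rw [hm]; exact Multiset.mem_add.2 (Or.inl h1)
      obtain ⟨i, -, hi⟩ := Multiset.mem_map.1 h3
      exact ⟨i, hi⟩
    choose F hF using hex
    have hinj : Function.Injective F := by
      intro a b hab
      have h1 := hF a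
      rw [hab, hF b] at h1
      have h2 := congrFun h1 (fun i => (a : ℕ).testBit i)
      simp [conjAll] at h2
      apply Fin.ext
      apply Nat.eq_of_testBit_eq
      intro i
      by_cases hi : i < n
      · exact h2 ⟨i, hi⟩
      · have hp : 2^n ≤ 2^i := Nat.pow_le_pow_right (by norm_num) (by omega)
        rw [Nat.testBit_lt_two_pow (a.2.trans_le hp), Nat.testBit_lt_two_pow (b.2.trans_le hp)]
    have hle : 2^n ≤ n + qq n := by unfold qq; omega
    obtain ⟨σ, hσ⟩ := Equiv.Perm.exists_extending_pair (Fin.castLE hle) F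
      (Fin.castLE_injective hle) hinj
    refine ⟨σ, fun x k hk => ?_⟩
    have h1 := hσ k
    have h2 : Fin.castLE hle k = ⟨k, hk⟩ := rfl
    rw [h2] at h1
    rw [h1]
    have := congrFun (hPe x) (F k)
    rw [hF] at this
    exact this
  · rw [depth_eq P i₀ hPd (by rw [hPc, hP]), hP]
  · unfold Circuit.L; omega
  · unfold Circuit.L; omega

theorem half_bound (n : ℕ) : ((n:ℝ) + 1) * 2^((n+1)/2) ≤ 2^n * (4/3 * (((n:ℝ)+1) * (3/4)^n)) := by
  have h1 : (2:ℝ)^n = 2^((n+1)/2) * 2^(n/2) := by rw [← pow_add]; congr 1; omega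
  have h2 : (1:ℝ) ≤ 2^(n/2) * (4/3 * (3/4)^n) := by
    rcases Nat.even_or_odd' n with ⟨k, rfl | rfl⟩
    · have : 2 * k / 2 = k := by omega
      rw [this, pow_mul]
      have : (2:ℝ)^k * (4/3 * ((3/4)^2)^k) = 4/3 * (9/8)^k := by
        rw [show (9/8:ℝ) = 2 * (3/4)^2 by norm_num, mul_pow]; ring
      rw [this]
      have := one_le_pow₀ (show (1:ℝ) ≤ 9/8 by norm_num) (n := k)
      linarith
    · have : (2 * k + 1) / 2 = k := by omega
      rw [this, pow_succ, pow_mul]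
      have : (2:ℝ)^k * (4/3 * (((3/4)^2)^k * (3/4))) = (9/8)^k := by
        rw [show (9/8:ℝ) = 2 * (3/4)^2 by norm_num, mul_pow]; ring
      rw [this]
      exact one_le_pow₀ (by norm_num)
  rw [h1]
  have h3 : (0:ℝ) ≤ ((n:ℝ)+1) * 2^((n+1)/2) := by positivity
  nlinarith

theorem tendsto_err : Tendsto (fun n : ℕ => ((n:ℝ)+1) * (3/4:ℝ)^n) atTop (nhds 0) := by
  have h1 := tendsto_self_mul_const_pow_of_lt_one (r := 3/4) (by norm_num) (by norm_num)
  have h2 := tendsto_pow_atTop_nhds_zero_of_lt_one (r := (3/4:ℝ)) (by norm_num) (by norm_num)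
  have := h1.add h2
  simpa [add_mul] using this

theorem asymp_of_err (a : ℕ → ℕ)
    (hlo : ∀ n, 3 * 2^n ≤ a n + 10 * (n+1) * 2^((n+1)/2))
    (hhi : ∀ n, a n ≤ 3 * 2^n + 10 * (n+1) * 2^((n+1)/2)) :
    AsympEquiv (fun n => (a n : ℝ)) (fun n => 3 * (2 : ℝ) ^ n) := by
  unfold AsympEquiv
  have ht := tendsto_err.const_mul 5
  rw [mul_zero] at ht
  have t1 := (tendsto_const_nhds (x := (1:ℝ))).sub ht
  have t2 := (tendsto_const_nhds (x := (1:ℝ))).add ht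
  rw [sub_zero] at t1
  rw [add_zero] at t2
  refine tendsto_of_tendsto_of_tendsto_of_le_of_le t1 t2 ?_ ?_
  · intro n
    have h := half_bound n
    have h1 : (3 * 2^n : ℝ) ≤ a n + 10 * (n+1) * 2^((n+1)/2) := by exact_mod_cast hlo n
    have h2 : (0:ℝ) < 2^n := by positivity
    have h3 : (0:ℝ) ≤ 2^n * (((n:ℝ)+1) * (3/4)^n) := by positivity
    simp only
    rw [le_div_iff₀ (by positivity)]
    nlinarith
  · intro n
    have h := half_bound n
    have h1 : (a n : ℝ) ≤ 3 * 2^n + 10 * (n+1) * 2^((n+1)/2) := by exact_mod_cast hhi n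
    have h2 : (0:ℝ) < 2^n := by positivity
    have h3 : (0:ℝ) ≤ 2^n * (((n:ℝ)+1) * (3/4)^n) := by positivity
    simp only
    rw [div_le_iff₀ (by positivity)]
    nlinarith

theorem dep_asymp : AsympEquiv (fun n => (dep n : ℝ)) (fun n => (n : ℝ)) := by
  unfold AsympEquiv
  have hlog : Tendsto (fun n : ℕ => Real.log n / n) atTop (nhds 0) :=
    (Real.isLittleO_log_id_atTop.tendsto_div_nhds_zero).comp tendsto_natCast_atTop_atTop
  have hinv : Tendsto (fun n : ℕ => (1:ℝ) / n) atTop (nhds 0) := tendsto_one_div_atTop_nhds_zero_nat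
  have t2 : Tendsto (fun n : ℕ => 1 + (2 / Real.log 2 * (Real.log n / n) + 4 * ((1:ℝ) / n)))
      atTop (nhds 1) := by
    have := ((hlog.const_mul (2 / Real.log 2)).add (hinv.const_mul 4)).const_add 1
    simpa using this
  refine tendsto_of_tendsto_of_tendsto_of_le_of_le' tendsto_const_nhds t2 ?_ ?_
  · filter_upwards [eventually_gt_atTop 0] with n hn
    have hn' : (0:ℝ) < n := by exact_mod_cast hn
    rw [le_div_iff₀ hn', one_mul]
    exact_mod_cast (by unfold dep; omega : n ≤ dep n)
  · filter_upwards [eventually_gt_atTop 0] with n hn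
    have hn' : (0:ℝ) < n := by exact_mod_cast hn
    have hc : (Nat.clog 2 n : ℝ) ≤ Real.log n / Real.log 2 + 1 := by
      have h1 := Real.natCeil_logb_natCast 2 n
      have h2 : (0:ℝ) ≤ Real.logb (2:ℕ) n := by
        apply Real.logb_nonneg (by norm_num)
        exact_mod_cast hn
      have h3 := (Nat.ceil_lt_add_one h2).le
      rw [h1] at h3
      simpa [Real.logb] using h3
    rw [div_le_iff₀ hn']
    have e : (1 + (2 / Real.log 2 * (Real.log n / n) + 4 * ((1:ℝ) / n))) * n
        = n + 2 * (Real.log n / Real.log 2) + 4 := by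
      have : (n:ℝ) ≠ 0 := hn'.ne'
      have h2 : Real.log 2 ≠ 0 := (Real.log_pos (by norm_num)).ne'
      field_simp
      ring
    rw [e]
    unfold dep
    push_cast
    linarith

theorem dep_le (n : ℕ) : dep n ≤ 3 * n + 2 := by
  have : Nat.clog 2 n ≤ n := Nat.clog_le_of_le_pow (Nat.lt_two_pow_self).le
  unfold dep; omega

/-- All `2ⁿ` conjunctions of `n` variables can be implemented by reversible circuits
`S_n` with `q n` additional inputs, where `D(S_n) ~ n`, `L(S_n) ~ 3 · 2ⁿ` and
`q n ~ 3 · 2ⁿ`. -/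
theorem conjunctions_depth :
    ∃ (q : ℕ → ℕ) (S : ∀ n, Circuit (n + q n)),
      (∀ n, Implements (S n) (conjAll n)) ∧
      AsympEquiv (fun n => ((S n).D : ℝ)) (fun n => (n : ℝ)) ∧
      AsympEquiv (fun n => ((S n).L : ℝ)) (fun n => 3 * (2 : ℝ) ^ n) ∧
      AsympEquiv (fun n => (q n : ℝ)) (fun n => 3 * (2 : ℝ) ^ n) := by
  choose S h1 h2 h3 h4 using exists_circ
  refine ⟨qq, S, h1, ?_, ?_, ?_⟩
  · simp only [h2]
    exact dep_asymp
  · apply asymp_of_err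
    · intro n
      have := h3 n
      have : 2 * 2^((n+1)/2) ≤ 10 * (n+1) * 2^((n+1)/2) := by gcongr; omega
      omega
    · intro n
      have := h4 n
      have := dep_le n
      have : 1 ≤ 2^((n+1)/2) := Nat.one_le_two_pow
      nlinarith
  · apply asymp_of_err
    · intro n
      unfold qq
      have : 0 ≤ 10 * (n+1) * 2^((n+1)/2) := Nat.zero_le _
      omega
    · intro n
      unfold qq
      have : 1 ≤ 2^((n+1)/2) := Nat.one_le_two_pow
      nlinarith

end Rev
end
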